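/- arXiv:1401.3326 — 9 statements merged into one kernel-verified Lean document; each statement's English description precedes it below -/
import Mathlib

section
/- Let β be a non-zero real number, let ε = 1 + βi, let K = ℚ(βi), and let Q be a non-trivial divisible subgroup of (ℝ,+) whose ℚ-linear dimension l is finite. Let G = {exp(εt + q) : t ∈ ℝ, q ∈ Q} ⊆ ℂ*. Assume SC_K holds. Then for every n ≥ 1 and every tuple y ∈ (ℂ*)^n one has 2·trdeg(y) − r(y) ≥ −3l − trdeg(K), where r(y) = dim_ℚ(ℚ ⊗_ℤ (D(y) ∩ G)) and D(y) = {z ∈ ℂ* : z^m lies in the multiplicative subgroup generated by y₁,…,y_n for some integer m ≥ 1} is the divisible hull of the subgroup generated by y. -/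
open Complex TensorProduct

noncomputable section

/-- `F`-linear dimension of the `F`-span of a set of complex numbers. -/
def linDim (F : Type*) [Field F] [Algebra F ℂ] (s : Set ℂ) : ℕ :=
  Module.finrank F (Submodule.span F s)

/-- Transcendence degree over ℚ of ℚ(s): the size of the largest algebraically
independent finite subset of `s`. -/
def trdeg (s : Set ℂ) : ℕ :=
  sSup {k : ℕ | ∃ t : Finset ℂ, ↑t ⊆ s ∧ t.card = k ∧
    AlgebraicIndependent ℚ (fun x : {y : ℂ // y ∈ t} => (x : ℂ))}

/-- The complex exponential as a map into the units of ℂ. -/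
def cexpU (z : ℂ) : ℂˣ := Units.mk0 (Complex.exp z) (Complex.exp_ne_zero z)

lemma cexpU_add (z w : ℂ) : cexpU (z + w) = cexpU z * cexpU w := by
  ext; simp [cexpU, Complex.exp_add]

lemma cexpU_zero : cexpU 0 = 1 := by
  ext; simp [cexpU]

lemma cexpU_neg (z : ℂ) : cexpU (-z) = (cexpU z)⁻¹ := by
  ext; simp [cexpU, Complex.exp_neg]

/-- The green subgroup `G = exp(εℝ + Q)` of `ℂ*`. -/
def greenGroup (ε : ℂ) (Q : AddSubgroup ℝ) : Subgroup ℂˣ where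
  carrier := {u | ∃ t : ℝ, ∃ q ∈ Q, u = cexpU (ε * t + q)}
  one_mem' := ⟨0, 0, Q.zero_mem, by simp [cexpU_zero]⟩
  mul_mem' := by
    rintro u v ⟨t₁, q₁, hq₁, rfl⟩ ⟨t₂, q₂, hq₂, rfl⟩
    exact ⟨t₁ + t₂, q₁ + q₂, Q.add_mem hq₁ hq₂, by
      rw [← cexpU_add]; congr 1; push_cast; ring⟩
  inv_mem' := by
    rintro u ⟨t, q, hq, rfl⟩
    exact ⟨-t, -q, Q.neg_mem hq, by rw [← cexpU_neg]; congr 1; push_cast; ring⟩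

/-- The divisible hull `D(S)` of the subgroup of `ℂ*` generated by a set `S`:
all `u` with `u ^ m` in the subgroup generated by `S` for some `m ≥ 1`. -/
def divHull (S : Set ℂˣ) : Subgroup ℂˣ where
  carrier := {u | ∃ m : ℕ, 1 ≤ m ∧ u ^ m ∈ Subgroup.closure S}
  one_mem' := ⟨1, le_refl 1, by simpa using Subgroup.one_mem _⟩
  mul_mem' := by
    rintro u v ⟨m₁, hm₁, h₁⟩ ⟨m₂, hm₂, h₂⟩
    refine ⟨m₁ * m₂, Nat.one_le_iff_ne_zero.mpr (by positivity), ?_⟩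
    rw [mul_pow]
    exact Subgroup.mul_mem _ (by rw [pow_mul]; exact Subgroup.pow_mem _ h₁ _)
      (by rw [mul_comm m₁ m₂, pow_mul]; exact Subgroup.pow_mem _ h₂ _)
  inv_mem' := by
    rintro u ⟨m, hm, h⟩
    exact ⟨m, hm, by rw [inv_pow]; exact Subgroup.inv_mem _ h⟩

/-- The ℚ-rank of a subgroup `H` of `ℂ*`: `dim_ℚ (ℚ ⊗_ℤ H)`. -/
def qRank (H : Subgroup ℂˣ) : ℕ :=
  Module.finrank ℚ (ℚ ⊗[ℤ] Additive ↥H)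

end

open AlgebraicIndependent in
lemma trdeg_eq_eRk {s : Set ℂ} (hs : s.Finite) :
    (trdeg s : ℕ∞) = (matroid ℚ ℂ).eRk s := by
  set S := {k : ℕ | ∃ t : Finset ℂ, ↑t ⊆ s ∧ t.card = k ∧
    AlgebraicIndependent ℚ (fun x : {y : ℂ // y ∈ t} => (x : ℂ))} with hS
  have hb : BddAbove S := by
    refine ⟨hs.toFinset.card, ?_⟩
    rintro k ⟨t, ht, rfl, -⟩
    exact Finset.card_le_card (fun x hx => by simpa using ht hx)
  have hne : S.Nonempty := by
    refine ⟨0, ∅, by simp, by simp, ?_⟩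
    exact (matroid ℚ ℂ).empty_indep.subset (by simp : ((∅ : Finset ℂ) : Set ℂ) ⊆ ∅)
  apply le_antisymm
  · obtain ⟨t, ht, hk, hi⟩ : sSup S ∈ S := Nat.sSup_mem hne hb
    have hi' : (matroid ℚ ℂ).Indep (t : Set ℂ) := hi
    have := hi'.encard_le_eRk_of_subset ht
    rw [Set.encard_coe_eq_coe_finsetCard, hk] at this
    exact this
  · rw [Matroid.eRk_le_iff]
    intro I hI hInd
    have hf := hs.subset hI
    lift I to Finset ℂ using hf
    rw [Set.encard_coe_eq_coe_finsetCard]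
    exact_mod_cast le_csSup hb ⟨I, hI, rfl, hInd⟩

open AlgebraicIndependent in
lemma eRk_conj_le (s : Set ℂ) :
    (matroid ℚ ℂ).eRk ((starRingEnd ℂ) '' s) ≤ (matroid ℚ ℂ).eRk s := by
  rw [Matroid.eRk_le_iff]
  intro I hI hInd
  let c : ℂ ≃ₐ[ℚ] ℂ := Complex.conjAe.restrictScalars ℚ
  have hc : ∀ z, c z = (starRingEnd ℂ) z := fun z => rfl
  have h1 : (matroid ℚ ℂ).Indep (c '' I) := by
    have h0 : AlgebraicIndependent ℚ ((↑) : I → ℂ) := hInd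
    have h2 : AlgebraicIndependent ℚ (c.toAlgHom ∘ ((↑) : I → ℂ)) := h0.map' c.injective
    have h3 := h2.to_subtype_range
    have h4 : Set.range (c.toAlgHom ∘ ((↑) : I → ℂ)) = c '' I := by
      ext z; simp
    rw [h4] at h3
    exact h3
  have hsub : c '' I ⊆ s := by
    rintro _ ⟨z, hz, rfl⟩
    obtain ⟨w, hw, rfl⟩ := hI hz
    simpa [hc] using hw
  have := h1.encard_le_eRk_of_subset hsub
  rwa [c.injective.encard_image] at this

lemma units_closure_le {n : ℕ} (y : Fin n → ℂˣ) (A : Subalgebra ℚ ℂ)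
    (hA : ∀ i, ((y i : ℂˣ) : ℂ) ∈ A) (hinv : ∀ z ∈ A, z⁻¹ ∈ A) (u : ℂˣ)
    (hu : u ∈ Subgroup.closure (Set.range y)) : (u : ℂ) ∈ A := by
  induction hu using Subgroup.closure_induction with
  | mem x hx => obtain ⟨i, rfl⟩ := hx; exact hA i
  | one => simpa using A.one_mem
  | mul a b _ _ ha hb => simpa using A.mul_mem ha hb
  | inv a _ ha => simpa using hinv _ ha

open AlgebraicIndependent in
lemma mem_closure_of_divHull {n : ℕ} (y : Fin n → ℂˣ) (u : ℂˣ)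
    (hu : u ∈ divHull (Set.range y)) :
    (u : ℂ) ∈ (matroid ℚ ℂ).closure (Set.range fun i => (y i : ℂ)) := by
  obtain ⟨m, hm, h⟩ := hu
  rw [matroid_closure_eq]
  set B := Algebra.adjoin ℚ (Set.range fun i => (y i : ℂ)) with hB
  have h1 : ((u ^ m : ℂˣ) : ℂ) ∈ Subalgebra.algebraicClosure B ℂ := by
    refine units_closure_le y ((Subalgebra.algebraicClosure B ℂ).restrictScalars ℚ) ?_ ?_ _ h
    · intro i
      exact isAlgebraic_algebraMap (⟨_, Algebra.subset_adjoin ⟨i, rfl⟩⟩ : B)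
    · intro z hz
      exact IsAlgebraic.inv (R := B) hz
  have h2 : IsAlgebraic B ((u : ℂ) ^ m) := by
    rw [Units.val_pow_eq_pow_val] at h1
    exact h1
  exact IsAlgebraic.of_pow hm h2

open AlgebraicIndependent in
lemma trdeg_bound {n : ℕ} (y : Fin n → ℂˣ) (s : Set ℂ) (hs : s.Finite)
    (hsy : ∀ z ∈ s, ∃ u ∈ divHull (Set.range y), (u : ℂ) = z) :
    trdeg (s ∪ (starRingEnd ℂ) '' s) ≤ 2 * trdeg (Set.range fun i => (y i : ℂ)) := by
  have key : (matroid ℚ ℂ).eRk s ≤ (matroid ℚ ℂ).eRk (Set.range fun i => (y i : ℂ)) := by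
    rw [← Matroid.eRk_closure_eq _ (Set.range fun i => (y i : ℂ))]
    apply Matroid.eRk_mono
    intro z hz
    obtain ⟨u, hu, rfl⟩ := hsy z hz
    exact mem_closure_of_divHull y u hu
  have h1 := (matroid ℚ ℂ).eRk_union_le_eRk_add_eRk s ((starRingEnd ℂ) '' s)
  have h2 := h1.trans (add_le_add key ((eRk_conj_le s).trans key))
  rw [← trdeg_eq_eRk (hs.union (hs.image _)), ← trdeg_eq_eRk (Set.finite_range _)] at h2
  rw [two_mul]
  exact_mod_cast h2

lemma exists_indep (H : Subgroup ℂˣ) :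
    ∃ g : Fin (qRank H) → Additive H, LinearIndependent ℤ g := by
  apply exists_linearIndependent_of_le_finrank
  have := (TensorProduct.isBaseChange ℤ (Additive H) ℚ).finrank_eq
  exact this.le

lemma log_indep {r : ℕ} {H : Subgroup ℂˣ} (g : Fin r → Additive H) (hg : LinearIndependent ℤ g)
    (x : Fin r → ℂ) (hx : ∀ j, ((g j).toMul : ℂˣ) = cexpU (x j)) : LinearIndependent ℚ x := by
  rw [← LinearIndependent.iff_fractionRing ℤ ℚ]
  rw [Fintype.linearIndependent_iff] at hg ⊢
  intro c hc
  apply hg c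
  let φ : ℂ →+ Additive ℂˣ :=
    { toFun := fun z => Additive.ofMul (cexpU z)
      map_zero' := by simp [cexpU_zero]
      map_add' := fun a b => by simp [cexpU_add] }
  let ψ : Additive H →+ Additive ℂˣ := MonoidHom.toAdditive H.subtype
  have hψ : Function.Injective ψ := fun a b h => by
    apply Additive.toMul.injective
    apply Subtype.ext
    exact congrArg Additive.toMul h
  apply hψ
  rw [map_zero, map_sum, ← map_zero φ, ← hc, map_sum]
  refine Finset.sum_congr rfl fun j _ => ?_
  rw [map_zsmul, map_zsmul]
  congr 1
  exact congrArg Additive.ofMul (hx j)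

/-- Linear algebra core. -/
lemma lin_core {r : ℕ} (β : ℝ) (hβ : β ≠ 0) (K : IntermediateField ℚ ℂ)
    (hK : (β : ℂ) * I ∈ K) (P : Submodule ℚ ℝ) [FiniteDimensional ℚ P]
    (t q : Fin r → ℝ) (hq : ∀ j, q j ∈ P) (x : Fin r → ℂ)
    (hx : ∀ j, x j = (1 + β * I) * t j + q j) (hli : LinearIndependent ℚ x) :
    (linDim K (Set.range x ∪ (starRingEnd ℂ) '' Set.range x) + r : ℕ)
      ≤ linDim ℚ (Set.range x ∪ (starRingEnd ℂ) '' Set.range x) + 3 * Module.finrank ℚ P := by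
  set T : Submodule ℚ ℝ := Submodule.span ℚ (Set.range t) with hT
  have : FiniteDimensional ℚ T := FiniteDimensional.span_of_finite ℚ (Set.finite_range t)
  set W : Submodule ℚ ℝ := Submodule.span ℚ (Set.range (t + q)) with hW
  have : FiniteDimensional ℚ W := FiniteDimensional.span_of_finite ℚ (Set.finite_range _)
  set S := Set.range x ∪ (starRingEnd ℂ) '' Set.range x with hS
  have hSf : S.Finite := (Set.finite_range x).union ((Set.finite_range x).image _)
  have htT : ∀ j, t j ∈ T := fun j => Submodule.subset_span ⟨j, rfl⟩
  let ofR : ℝ →ₗ[ℚ] ℂ := (Complex.ofRealAm.restrictScalars ℚ).toLinearMap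
  have hofR : ∀ a, ofR a = (a : ℂ) := fun _ => rfl
  -- `dim T ≤ dim W + l`
  have h1 : Module.finrank ℚ T ≤ Module.finrank ℚ W + Module.finrank ℚ P := by
    refine le_trans (Submodule.finrank_mono ?_) (Submodule.finrank_add_le_finrank_add_finrank W P)
    rw [hT, Submodule.span_le]
    rintro _ ⟨j, rfl⟩
    have : t j = (t + q) j + (-q j) := by simp
    rw [this]
    exact Submodule.add_mem_sup (Submodule.subset_span ⟨j, rfl⟩) (P.neg_mem (hq j))
  -- `r ≤ dim T + l`
  have h2 : r ≤ Module.finrank ℚ T + Module.finrank ℚ P := by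
    let m : ℂ →ₗ[ℚ] ℂ := LinearMap.mulLeft ℚ (1 + β * I)
    have hr := finrank_span_eq_card hli
    rw [Fintype.card_fin] at hr
    rw [← hr]
    have hle : Submodule.span ℚ (Set.range x) ≤ T.map (m ∘ₗ ofR) ⊔ P.map ofR := by
      rw [Submodule.span_le]
      rintro _ ⟨j, rfl⟩
      rw [hx]
      exact Submodule.add_mem_sup ⟨t j, htT j, rfl⟩ ⟨q j, hq j, rfl⟩
    refine (Submodule.finrank_mono hle).trans
      ((Submodule.finrank_add_le_finrank_add_finrank _ _).trans ?_)
    exact add_le_add (Submodule.finrank_map_le _ _) (Submodule.finrank_map_le _ _)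
  -- `dim_K ≤ dim T + l`
  have h3 : linDim K S ≤ Module.finrank ℚ T + Module.finrank ℚ P := by
    let bT := Module.finBasis ℚ T
    let bP := Module.finBasis ℚ P
    let v : Fin (Module.finrank ℚ T) ⊕ Fin (Module.finrank ℚ P) → ℂ :=
      Sum.elim (fun i => ((bT i : ℝ) : ℂ)) (fun i => ((bP i : ℝ) : ℂ))
    have hvT : ∀ a ∈ T, (a : ℂ) ∈ Submodule.span K (Set.range v) := by
      intro a ha
      have h := bT.sum_repr ⟨a, ha⟩
      have h' := congrArg (fun z : T => ((z : ℝ) : ℂ)) h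
      simp only at h'
      rw [← h']
      push_cast
      refine Submodule.sum_mem _ fun i _ => ?_
      exact Submodule.smul_of_tower_mem _ _ (Submodule.subset_span ⟨Sum.inl i, rfl⟩)
    have hvP : ∀ a ∈ P, (a : ℂ) ∈ Submodule.span K (Set.range v) := by
      intro a ha
      have h := bP.sum_repr ⟨a, ha⟩
      have h' := congrArg (fun z : P => ((z : ℝ) : ℂ)) h
      simp only at h'
      rw [← h']
      push_cast
      refine Submodule.sum_mem _ fun i _ => ?_
      exact Submodule.smul_of_tower_mem _ _ (Submodule.subset_span ⟨Sum.inr i, rfl⟩)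
    have hle : Submodule.span K S ≤ Submodule.span K (Set.range v) := by
      rw [Submodule.span_le]
      have hk1 : (1 + β * I : ℂ) ∈ K := K.add_mem K.one_mem hK
      have hk2 : (1 - β * I : ℂ) ∈ K := K.sub_mem K.one_mem hK
      rintro _ (⟨j, rfl⟩ | ⟨_, ⟨j, rfl⟩, rfl⟩)
      · rw [hx]
        exact Submodule.add_mem _
          (Submodule.smul_mem _ (⟨_, hk1⟩ : K) (hvT _ (htT j))) (hvP _ (hq j))
      · have : (starRingEnd ℂ) (x j) = (1 - β * I) * t j + q j := by
          rw [hx]; simp only [map_add, map_mul, map_one, Complex.conj_ofReal, Complex.conj_I]; ring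
        rw [this]
        exact Submodule.add_mem _
          (Submodule.smul_mem _ (⟨_, hk2⟩ : K) (hvT _ (htT j))) (hvP _ (hq j))
    have : FiniteDimensional K (Submodule.span K (Set.range v)) :=
      FiniteDimensional.span_of_finite K (Set.finite_range v)
    refine (Submodule.finrank_mono hle).trans ((finrank_range_le_card v).trans ?_)
    simp
  -- `dim_ℚ ≥ dim T + dim W`
  have h4 : Module.finrank ℚ T + Module.finrank ℚ W ≤ linDim ℚ S := by
    let m : ℂ →ₗ[ℚ] ℂ := LinearMap.mulLeft ℚ (β * I)
    let re : ℂ →ₗ[ℚ] ℝ := Complex.reLm.restrictScalars ℚ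
    have hre : ∀ z, re z = z.re := fun _ => rfl
    set V := Submodule.span ℚ S with hV
    have : FiniteDimensional ℚ V := FiniteDimensional.span_of_finite ℚ hSf
    have hxV : ∀ j, x j ∈ V := fun j => Submodule.subset_span (Or.inl ⟨j, rfl⟩)
    have hcV : ∀ j, (starRingEnd ℂ) (x j) ∈ V :=
      fun j => Submodule.subset_span (Or.inr ⟨_, ⟨j, rfl⟩, rfl⟩)
    have hc : ∀ j, (starRingEnd ℂ) (x j) = (1 - β * I) * t j + q j := fun j => by
      rw [hx]; simp only [map_add, map_mul, map_one, Complex.conj_ofReal, Complex.conj_I]; ring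
    have rn := LinearMap.finrank_range_add_finrank_ker (re.domRestrict V)
    have hTV : T.map (m ∘ₗ ofR) ≤ V := by
      rw [hT, Submodule.map_span, Submodule.span_le]
      rintro _ ⟨_, ⟨j, rfl⟩, rfl⟩
      have : (m ∘ₗ ofR) (t j) = (1 / 2 : ℚ) • (x j - (starRingEnd ℂ) (x j)) := by
        rw [hc, hx, Rat.smul_def]; simp [m, hofR]; ring
      rw [this]
      exact V.smul_mem _ (V.sub_mem (hxV j) (hcV j))
    have hWr : W ≤ LinearMap.range (re.domRestrict V) := by
      rw [hW, Submodule.span_le]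
      rintro _ ⟨j, rfl⟩
      refine ⟨⟨x j, hxV j⟩, ?_⟩
      simp [hre, hx]
    have hker : Module.finrank ℚ T ≤ Module.finrank ℚ (LinearMap.ker (re.domRestrict V)) := by
      let f : T →ₗ[ℚ] LinearMap.ker (re.domRestrict V) :=
        LinearMap.codRestrict _ (LinearMap.codRestrict V ((m ∘ₗ ofR) ∘ₗ T.subtype)
          (fun a => hTV ⟨a, a.2, rfl⟩)) (fun a => by
            simp [LinearMap.mem_ker, hre, m, hofR])
      apply LinearMap.finrank_le_finrank_of_injective (f := f)
      intro a b hab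
      have h' : (β * I : ℂ) * (a : ℝ) = (β * I : ℂ) * (b : ℝ) :=
        congrArg (fun z : LinearMap.ker (re.domRestrict V) => ((z : V) : ℂ)) hab
      have hne : (β * I : ℂ) ≠ 0 := mul_ne_zero (by exact_mod_cast hβ) I_ne_zero
      exact Subtype.ext (by exact_mod_cast mul_left_cancel₀ hne h')
    have := Submodule.finrank_mono hWr
    have hd : linDim ℚ S = Module.finrank ℚ V := rfl
    omega
  omega

/-- assuming SC_K for K = ℚ(βi), the predimension inequality
`2 trdeg(y) − r(y) ≥ −3l − trdeg(K)` holds for every tuple `y` of nonzero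
complex numbers, where `r(y) = dim_ℚ (ℚ ⊗_ℤ (D(y) ∩ G))` and
`G = exp(εℝ + Q)`. -/
theorem statement0 (β : ℝ) (hβ : β ≠ 0) (ε : ℂ) (hε : ε = 1 + β * I)
    (K : IntermediateField ℚ ℂ) (hK : K = IntermediateField.adjoin ℚ {(β : ℂ) * I})
    (Q : AddSubgroup ℝ) (hQnt : Q ≠ ⊥)
    (hQdiv : ∀ q ∈ Q, ∀ m : ℕ, 0 < m → ∃ r ∈ Q, m • r = q)
    (l : ℕ) (hl : Module.rank ℚ (Submodule.span ℚ (Q : Set ℝ)) = l)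
    (hSC : ∀ (m : ℕ) (x : Fin m → ℂ),
      (linDim K (Set.range x) : ℤ) + trdeg (Set.range fun i => Complex.exp (x i))
        - linDim ℚ (Set.range x) ≥ -(trdeg (K : Set ℂ) : ℤ)) :
    ∀ (n : ℕ), 1 ≤ n → ∀ (y : Fin n → ℂˣ),
      2 * (trdeg (Set.range fun i => (y i : ℂ)) : ℤ)
          - (qRank (divHull (Set.range y) ⊓ greenGroup ε Q) : ℤ)
        ≥ -3 * l - trdeg (K : Set ℂ) := by
  intro n _ y
  obtain ⟨r, hr⟩ : ∃ r, r = qRank (divHull (Set.range y) ⊓ greenGroup ε Q) := ⟨_, rfl⟩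
  have hex := exists_indep (divHull (Set.range y) ⊓ greenGroup ε Q)
  rw [← hr] at hex ⊢
  obtain ⟨g, hg⟩ := hex
  have hG : ∀ j, ∃ t : ℝ, ∃ q ∈ Q, ((g j).toMul : ℂˣ) = cexpU (ε * t + q) :=
    fun j => (g j).toMul.2.2
  choose t q hq hgx using hG
  set P := Submodule.span ℚ (Q : Set ℝ) with hP
  have : FiniteDimensional ℚ P :=
    Module.finite_of_rank_eq_nat hl
  have hPl : Module.finrank ℚ P = l := Module.finrank_eq_of_rank_eq hl
  let x : Fin r → ℂ := fun j => ε * t j + q j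
  have hli : LinearIndependent ℚ x := log_indep g hg x hgx
  have hmem : (β : ℂ) * I ∈ K := by
    rw [hK]; exact IntermediateField.mem_adjoin_simple_self ℚ _
  have hcore := lin_core β hβ K hmem P t q (fun j => Submodule.subset_span (hq j)) x
    (fun j => by simp only [x, hε]) hli
  set S := Set.range x ∪ (starRingEnd ℂ) '' Set.range x with hS
  have hSf : S.Finite := (Set.finite_range x).union ((Set.finite_range x).image _)
  obtain ⟨m, X, -, hX⟩ := hSf.fin_param
  have hsc := hSC m X
  have hexp : (Set.range fun i => Complex.exp (X i)) = Complex.exp '' S := by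
    rw [← hX, ← Set.range_comp]; rfl
  have hexp2 : Complex.exp '' S = (Complex.exp '' Set.range x) ∪
      (starRingEnd ℂ) '' (Complex.exp '' Set.range x) := by
    rw [hS, Set.image_union, Set.image_image, Set.image_image]
    simp only [Complex.exp_conj]
  have htr := trdeg_bound y (Complex.exp '' Set.range x) ((Set.finite_range x).image _) (by
    rintro _ ⟨_, ⟨j, rfl⟩, rfl⟩
    exact ⟨(g j).toMul, (g j).toMul.2.1, by rw [hgx j]; rfl⟩)
  rw [hexp, hexp2, hX] at hsc
  rw [hPl] at hcore
  zify at hcore htr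
  linarith
end

section
/- Let β be a non-zero real number, let ε = 1 + βi and K = ℚ(βi), and let Q be a subgroup of (ℝ,+) whose ℚ-linear dimension l is finite. Suppose t ∈ ℝ^n, q ∈ Q^n, and the tuple x = εt + q (coordinatewise) is ℚ-linearly independent as a tuple of complex numbers. Then lin.d._ℚ(x, x̄) − lin.d._K(x, x̄) ≥ n − 3l, where x̄ denotes the coordinatewise complex conjugate of x. -/
open Complex

theorem finrank_span_K_le (K : IntermediateField ℚ ℂ) (s : Set ℂ) (hs : s.Finite) :
    Module.finrank K (Submodule.span K s) ≤ Module.finrank ℚ (Submodule.span ℚ s) := by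
  have : FiniteDimensional ℚ (Submodule.span ℚ s) := FiniteDimensional.span_of_finite ℚ hs
  let b := Module.finBasis ℚ (Submodule.span ℚ s)
  let f : Fin (Module.finrank ℚ (Submodule.span ℚ s)) → ℂ := fun i => (b i : ℂ)
  have h1 : Submodule.span K s ≤ Submodule.span K (Set.range f) := by
    rw [Submodule.span_le]
    intro y hy
    have hyspan : y ∈ Submodule.span ℚ s := Submodule.subset_span hy
    have h := b.sum_repr ⟨y, hyspan⟩
    have h2 := congrArg Subtype.val h
    have h3 : ∑ i, (b.repr ⟨y, hyspan⟩ i) • f i = y := by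
      refine Eq.trans ?_ h2
      rw [AddSubmonoidClass.coe_finsetSum]
      rfl
    rw [← h3]
    refine Submodule.sum_mem _ fun i _ => ?_
    have h4 : f i ∈ Submodule.span K (Set.range f) := Submodule.subset_span ⟨i, rfl⟩
    have h5 := Submodule.smul_mem _ (algebraMap ℚ K (b.repr ⟨y, hyspan⟩ i)) h4
    rwa [algebraMap_smul] at h5
  have : FiniteDimensional K (Submodule.span K (Set.range f)) :=
    FiniteDimensional.span_of_finite K (Set.finite_range f)
  refine (Submodule.finrank_mono h1).trans ?_
  have h6 := finrank_range_le_card (R := K) f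
  rw [Fintype.card_fin] at h6
  exact h6

/-- for `x = εt + q` with `t` real, `q ∈ Q^n` and `x`
ℚ-linearly independent, `lin.d._ℚ(x, x̄) − lin.d._K(x, x̄) ≥ n − 3l`. -/
theorem statement1 (β : ℝ) (hβ : β ≠ 0) (ε : ℂ) (hε : ε = 1 + β * I)
    (K : IntermediateField ℚ ℂ) (hK : K = IntermediateField.adjoin ℚ {(β : ℂ) * I})
    (Q : AddSubgroup ℝ) (l : ℕ)
    (hl : Module.rank ℚ (Submodule.span ℚ (Q : Set ℝ)) = l)
    (n : ℕ) (t : Fin n → ℝ) (q : Fin n → ℝ) (hq : ∀ i, q i ∈ Q)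
    (x : Fin n → ℂ) (hx : ∀ i, x i = ε * t i + q i)
    (hind : LinearIndependent ℚ x) :
    (linDim ℚ (Set.range x ∪ Set.range fun i => (starRingEnd ℂ) (x i)) : ℤ)
        - linDim K (Set.range x ∪ Set.range fun i => (starRingEnd ℂ) (x i))
      ≥ (n : ℤ) - 3 * l := by
  set xbar : Fin n → ℂ := fun i => (starRingEnd ℂ) (x i) with hxbar
  have hxconj : ∀ i, xbar i = (1 - β * I) * t i + q i := by
    intro i
    simp only [hxbar, hx, hε, map_add, map_mul, map_one, Complex.conj_ofReal, Complex.conj_I]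
    ring
  let tc : Fin n → ℂ := fun i => (t i : ℂ)
  let qc : Fin n → ℂ := fun i => (q i : ℂ)
  let rc : Fin n → ℂ := fun i => (t i : ℂ) + q i
  let T := Submodule.span ℚ (Set.range tc)
  let P := Submodule.span ℚ (Set.range qc)
  let R := Submodule.span ℚ (Set.range rc)
  let S := Submodule.span ℚ (Set.range x ∪ Set.range xbar)
  have : FiniteDimensional ℚ T := FiniteDimensional.span_of_finite ℚ (Set.finite_range _)
  have : FiniteDimensional ℚ P := FiniteDimensional.span_of_finite ℚ (Set.finite_range _)
  have : FiniteDimensional ℚ R := FiniteDimensional.span_of_finite ℚ (Set.finite_range _)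
  have : FiniteDimensional ℚ S := FiniteDimensional.span_of_finite ℚ
    ((Set.finite_range _).union (Set.finite_range _))
  have htT : ∀ i, (t i : ℂ) ∈ T := fun i => Submodule.subset_span ⟨i, rfl⟩
  have hqP : ∀ i, (q i : ℂ) ∈ P := fun i => Submodule.subset_span ⟨i, rfl⟩
  have hrR : ∀ i, (t i : ℂ) + q i ∈ R := fun i => Submodule.subset_span ⟨i, rfl⟩
  have hxS : ∀ i, x i ∈ S := fun i => Submodule.subset_span (Or.inl ⟨i, rfl⟩)
  have hxSbar : ∀ i, xbar i ∈ S := fun i => Submodule.subset_span (Or.inr ⟨i, rfl⟩)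
  -- dimension of P
  have hP : Module.finrank ℚ P ≤ l := by
    let V := Submodule.span ℚ (Q : Set ℝ)
    have hV : Module.finrank ℚ V = l := Module.finrank_eq_of_rank_eq hl
    have : FiniteDimensional ℚ V :=
      Module.rank_lt_aleph0_iff.1 (by rw [hl]; exact Cardinal.natCast_lt_aleph0)
    let g : ℝ →ₗ[ℚ] ℂ := Complex.ofRealLI.toLinearMap.restrictScalars ℚ
    have h : P ≤ V.map g := by
      rw [Submodule.span_le]
      rintro _ ⟨i, rfl⟩
      exact ⟨q i, Submodule.subset_span (hq i), rfl⟩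
    calc _ ≤ _ := Submodule.finrank_mono h
      _ ≤ _ := Submodule.finrank_map_le g V
      _ = l := hV
  -- n ≤ d + p
  have h1 : n ≤ Module.finrank ℚ T + Module.finrank ℚ P := by
    have ha : Module.finrank ℚ (Submodule.span ℚ (Set.range x)) = n := by
      simpa using finrank_span_eq_card hind
    let g : ℂ →ₗ[ℚ] ℂ := LinearMap.mulLeft ℚ ε
    have hb : Submodule.span ℚ (Set.range x) ≤ T.map g ⊔ P := by
      rw [Submodule.span_le]
      rintro _ ⟨i, rfl⟩
      rw [hx]
      exact Submodule.add_mem_sup ⟨t i, htT i, rfl⟩ (hqP i)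
    have hc := Submodule.finrank_mono hb
    have hd := Submodule.finrank_add_le_finrank_add_finrank (T.map g) P
    have he := Submodule.finrank_map_le g T
    omega
  -- d ≤ r + p
  have h2 : Module.finrank ℚ T ≤ Module.finrank ℚ R + Module.finrank ℚ P := by
    have hb : T ≤ R ⊔ P := by
      rw [Submodule.span_le]
      rintro _ ⟨i, rfl⟩
      have := Submodule.sub_mem (R ⊔ P) (Submodule.mem_sup_left (hrR i))
        (Submodule.mem_sup_right (hqP i))
      simpa [tc] using this
    exact (Submodule.finrank_mono hb).trans (Submodule.finrank_add_le_finrank_add_finrank R P)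
  -- d + r ≤ dim S
  have h3 : Module.finrank ℚ T + Module.finrank ℚ R ≤ Module.finrank ℚ S := by
    let g : ℂ →ₗ[ℚ] ℂ := LinearMap.mulLeft ℚ ((β : ℂ) * I)
    have hbI : (β : ℂ) * I ≠ 0 := by simp [hβ]
    have hg : Function.Injective g := mul_right_injective₀ hbI
    have ha : Module.finrank ℚ (T.map g) = Module.finrank ℚ T :=
      (Submodule.equivMapOfInjective g hg T).finrank_eq.symm
    have hb : T.map g ⊔ R ≤ S := by
      refine sup_le ?_ ?_
      · rw [Submodule.map_span, Submodule.span_le]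
        rintro _ ⟨_, ⟨i, rfl⟩, rfl⟩
        have := S.smul_mem (1/2 : ℚ) (S.sub_mem (hxS i) (hxSbar i))
        rw [SetLike.mem_coe]
        convert this using 1
        rw [hx, hxconj, hε, Rat.smul_def]
        simp only [g, tc, LinearMap.mulLeft_apply]
        push_cast
        ring
      · rw [Submodule.span_le]
        rintro _ ⟨i, rfl⟩
        have := S.smul_mem (1/2 : ℚ) (S.add_mem (hxS i) (hxSbar i))
        rw [SetLike.mem_coe]
        convert this using 1
        rw [hx, hxconj, hε, Rat.smul_def]
        simp only [rc]
        push_cast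
        ring
    have hT : T.map g ≤ LinearMap.ker (Complex.reLm.restrictScalars ℚ) := by
      rw [Submodule.map_span, Submodule.span_le]
      rintro _ ⟨_, ⟨i, rfl⟩, rfl⟩
      simp [g, tc]
    have hR : R ≤ LinearMap.ker (Complex.imLm.restrictScalars ℚ) := by
      rw [Submodule.span_le]
      rintro _ ⟨i, rfl⟩
      simp [rc]
    have hd : T.map g ⊓ R = ⊥ := by
      rw [eq_bot_iff]
      rintro z ⟨hz1, hz2⟩
      have e1 := hT hz1
      have e2 := hR hz2
      simp only [LinearMap.mem_ker, LinearMap.coe_restrictScalars, Complex.reLm_coe,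
        Complex.imLm_coe] at e1 e2
      exact (Submodule.mem_bot ℚ).2 (Complex.ext e1 e2)
    have he := Submodule.finrank_sup_add_finrank_inf_eq (T.map g) R
    rw [hd, finrank_bot] at he
    have := Submodule.finrank_mono hb
    omega
  -- dim over K
  have h4 : Module.finrank K (Submodule.span K (Set.range x ∪ Set.range xbar))
      ≤ Module.finrank ℚ T + Module.finrank ℚ P := by
    have hfin : (Set.range tc ∪ Set.range qc).Finite :=
      (Set.finite_range _).union (Set.finite_range _)
    have : FiniteDimensional K (Submodule.span K (Set.range tc ∪ Set.range qc)) :=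
      FiniteDimensional.span_of_finite K hfin
    have hbK : (β : ℂ) * I ∈ K := by
      rw [hK]; exact IntermediateField.mem_adjoin_simple_self ℚ _
    have key : ∀ c ∈ K, ∀ i, c * t i + q i ∈
        Submodule.span K (Set.range tc ∪ Set.range qc) := by
      intro c hc i
      refine Submodule.add_mem _ ?_ (Submodule.subset_span (Or.inr ⟨i, rfl⟩))
      exact Submodule.smul_mem _ (⟨c, hc⟩ : K) (Submodule.subset_span (Or.inl ⟨i, rfl⟩))
    have ha : Submodule.span K (Set.range x ∪ Set.range xbar) ≤
        Submodule.span K (Set.range tc ∪ Set.range qc) := by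
      rw [Submodule.span_le]
      rintro _ (⟨i, rfl⟩ | ⟨i, rfl⟩)
      · rw [hx, hε]
        exact key _ (K.add_mem K.one_mem hbK) i
      · rw [hxconj]
        exact key _ (K.sub_mem K.one_mem hbK) i
    refine (Submodule.finrank_mono ha).trans ((finrank_span_K_le K _ hfin).trans ?_)
    rw [Submodule.span_union]
    exact Submodule.finrank_add_le_finrank_add_finrank T P
  have e1 : linDim ℚ (Set.range x ∪ Set.range xbar) = Module.finrank ℚ S := rfl
  have e2 : linDim K (Set.range x ∪ Set.range xbar) =
    Module.finrank K (Submodule.span K (Set.range x ∪ Set.range xbar)) := rfl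
  rw [e1, e2]
  omega
end

section
/- Assume the Schanuel Conjecture: for every n and every ℚ-linearly independent tuple x ∈ ℂ^n, trdeg(x, exp(x)) ≥ n. Let K be a subfield of ℂ of finite transcendence degree over ℚ. Then for every finite tuple x of complex numbers, lin.d._K(x) + trdeg(exp(x)) − lin.d._ℚ(x) ≥ −trdeg(K). -/
open Complex

open AlgebraicIndependent in
lemma trdeg_le_eRk (s : Set ℂ) : (trdeg s : ℕ∞) ≤ (matroid ℚ ℂ).eRk s := by
  by_cases hb : BddAbove {k : ℕ | ∃ t : Finset ℂ, ↑t ⊆ s ∧ t.card = k ∧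
    AlgebraicIndependent ℚ (fun x : {y : ℂ // y ∈ t} => (x : ℂ))}
  · have hne : {k : ℕ | ∃ t : Finset ℂ, ↑t ⊆ s ∧ t.card = k ∧
        AlgebraicIndependent ℚ (fun x : {y : ℂ // y ∈ t} => (x : ℂ))}.Nonempty := by
      refine ⟨0, ∅, by simp, by simp, ?_⟩
      exact (matroid_indep_iff (R := ℚ) (s := ((∅ : Finset ℂ) : Set ℂ))).1 (by simp)
    obtain ⟨t, hts, hc, hi⟩ := Nat.sSup_mem hne hb
    have hi' : (matroid ℚ ℂ).Indep (t : Set ℂ) := matroid_indep_iff.2 hi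
    have := hi'.encard_le_eRk_of_subset hts
    rw [Set.encard_coe_eq_coe_finsetCard, hc] at this
    exact this
  · have : trdeg s = 0 := Nat.sSup_of_not_bddAbove hb
    simp [this]

open AlgebraicIndependent in
lemma eRk_le_trdeg (s : Set ℂ)
    (hb : BddAbove {k : ℕ | ∃ t : Finset ℂ, ↑t ⊆ s ∧ t.card = k ∧
      AlgebraicIndependent ℚ (fun x : {y : ℂ // y ∈ t} => (x : ℂ))}) :
    (matroid ℚ ℂ).eRk s ≤ (trdeg s : ℕ∞) := by
  by_contra! h
  have h1 := Order.add_one_le_of_lt h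
  obtain ⟨I, hIs, hI, hc⟩ := Matroid.le_eRk_iff.1 h1
  have hfin : I.Finite := Set.finite_of_encard_eq_coe (k := trdeg s + 1) (by simpa using hc)
  lift I to Finset ℂ using hfin
  rw [Set.encard_coe_eq_coe_finsetCard] at hc
  have hc' : I.card = trdeg s + 1 := by exact_mod_cast hc
  have : trdeg s + 1 ≤ trdeg s := le_csSup hb ⟨I, hIs, hc', matroid_indep_iff.1 hI⟩
  omega

lemma bdd_of_finite (s : Set ℂ) (hs : s.Finite) :
    BddAbove {k : ℕ | ∃ t : Finset ℂ, ↑t ⊆ s ∧ t.card = k ∧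
      AlgebraicIndependent ℚ (fun x : {y : ℂ // y ∈ t} => (x : ℂ))} := by
  lift s to Finset ℂ using hs
  refine ⟨s.card, ?_⟩
  rintro k ⟨t, hts, rfl, -⟩
  exact Finset.card_le_card (by exact_mod_cast hts)

/-- the Schanuel Conjecture implies the Schanuel Conjecture for
raising to powers in any subfield `K` of ℂ of finite transcendence degree:
`lin.d._K(x) + trdeg(exp x) − lin.d._ℚ(x) ≥ −trdeg(K)`. -/
theorem statement4
    (hSC : ∀ (n : ℕ) (x : Fin n → ℂ), LinearIndependent ℚ x →
      trdeg (Set.range x ∪ Set.range fun i => Complex.exp (x i)) ≥ n)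
    (K : IntermediateField ℚ ℂ)
    (htd : BddAbove {k : ℕ | ∃ t : Finset ℂ, ↑t ⊆ (K : Set ℂ) ∧ t.card = k ∧
      AlgebraicIndependent ℚ (fun x : {y : ℂ // y ∈ t} => (x : ℂ))}) :
    ∀ (m : ℕ) (x : Fin m → ℂ),
      (linDim K (Set.range x) : ℤ) + trdeg (Set.range fun i => Complex.exp (x i))
          - linDim ℚ (Set.range x)
        ≥ -(trdeg (K : Set ℂ) : ℤ) := by
  intro m x
  set M := AlgebraicIndependent.matroid ℚ ℂ with hM
  have : Module.Finite ℚ (Submodule.span ℚ (Set.range x)) :=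
    FiniteDimensional.span_of_finite ℚ (Set.finite_range x)
  have : Module.Finite K (Submodule.span K (Set.range x)) :=
    FiniteDimensional.span_of_finite K (Set.finite_range x)
  obtain ⟨b, hbx, -, hbi⟩ := Submodule.exists_fun_fin_finrank_span_eq ℚ (Set.range x)
  obtain ⟨c, hcx, hcs, -⟩ := Submodule.exists_fun_fin_finrank_span_eq K (Set.range x)
  have h1 := hSC _ b hbi
  set U : Set ℂ := (K : Set ℂ) ∪ Set.range c with hU
  have hcl : M.closure U = (Subalgebra.algebraicClosure (Algebra.adjoin ℚ U) ℂ : Set ℂ) :=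
    AlgebraicIndependent.matroid_closure_eq
  have hUcl : U ⊆ M.closure U := M.subset_closure U (by simp [hM])
  have hspan : ∀ z ∈ Submodule.span K (Set.range c), z ∈ M.closure U := by
    intro z hz
    rw [hcl]
    rw [hcl] at hUcl
    induction hz using Submodule.span_induction with
    | mem z hz => exact hUcl (Or.inr hz)
    | zero => exact zero_mem _
    | add y z _ _ hy hz => exact add_mem hy hz
    | smul a z _ hz => exact mul_mem (hUcl (Or.inl a.2)) hz
  have hsub : Set.range b ∪ (Set.range fun i => Complex.exp (b i)) ⊆
      M.closure U ∪ Set.range fun i => Complex.exp (x i) := by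
    rintro z (⟨i, rfl⟩ | ⟨i, rfl⟩)
    · left
      apply hspan
      rw [hcs]
      exact Submodule.subset_span (hbx i)
    · right
      obtain ⟨j, hj⟩ := hbx i
      exact ⟨j, by simp [hj]⟩
  have h2 : (linDim ℚ (Set.range x) : ℕ∞) ≤
      trdeg (K : Set ℂ) + linDim K (Set.range x)
        + trdeg (Set.range fun i => Complex.exp (x i)) := by
    calc (linDim ℚ (Set.range x) : ℕ∞)
        ≤ trdeg (Set.range b ∪ Set.range fun i => Complex.exp (b i)) := by exact_mod_cast h1
      _ ≤ M.eRk (Set.range b ∪ Set.range fun i => Complex.exp (b i)) := trdeg_le_eRk _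
      _ ≤ M.eRk (M.closure U ∪ Set.range fun i => Complex.exp (x i)) := M.eRk_mono hsub
      _ ≤ M.eRk (M.closure U) + M.eRk (Set.range fun i => Complex.exp (x i)) :=
          M.eRk_union_le_eRk_add_eRk _ _
      _ = M.eRk U + M.eRk (Set.range fun i => Complex.exp (x i)) := by
          rw [M.eRk_closure_eq]
      _ ≤ (M.eRk K + M.eRk (Set.range c)) + M.eRk (Set.range fun i => Complex.exp (x i)) := by
          gcongr
          exact M.eRk_union_le_eRk_add_eRk _ _
      _ ≤ _ := by
          gcongr
          · exact eRk_le_trdeg _ htd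
          · refine (M.eRk_le_encard _).trans ?_
            rw [← Set.image_univ]
            refine (Set.encard_image_le _ _).trans ?_
            simp [linDim, Set.encard_univ]
          · exact eRk_le_trdeg _ (bdd_of_finite _ (Set.finite_range _))
  have h3 : linDim ℚ (Set.range x) ≤ trdeg (K : Set ℂ) + linDim K (Set.range x)
        + trdeg (Set.range fun i => Complex.exp (x i)) := by exact_mod_cast h2
  omega
end

section
/- Let K be a subfield of ℂ and let D be a subset of ℂ containing K. Then for every finite tuple x of complex numbers, δ_K(x/D) ≥ δ_exp(x/D); that is, lin.d._K(x/D) + trdeg(exp(x)/exp(D)) − lin.d._ℚ(x/D) ≥ trdeg(x, exp(x) / D ∪ exp(D)) − lin.d._ℚ(x/D), equivalently lin.d._K(x/D) + trdeg(exp(x)/exp(D)) ≥ trdeg(x, exp(x) / D ∪ exp(D)). -/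
open Complex

noncomputable section

/-- `F`-linear dimension of `s` over `B`: the dimension of the image of the
`F`-span of `s` in the quotient of ℂ by the `F`-span of `B`. -/
def linDimOver (F : Type*) [Field F] [Algebra F ℂ] (B s : Set ℂ) : ℕ :=
  Module.finrank F ((Submodule.span F s).map (Submodule.span F B).mkQ)

/-- Transcendence degree of ℚ(C)(s) over ℚ(C): the size of the largest finite
subset of `s` algebraically independent over ℚ(C). -/
def trdegOver (C s : Set ℂ) : ℕ :=
  sSup {k : ℕ | ∃ t : Finset ℂ, ↑t ⊆ s ∧ t.card = k ∧
    AlgebraicIndependent (IntermediateField.adjoin ℚ C) (fun x : {y : ℂ // y ∈ t} => (x : ℂ))}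

end

lemma isAlgebraic_of_subset {R S : Type*} [CommRing R] [CommRing S] [Algebra R ℂ] [Algebra S ℂ]
    (A : Subalgebra R ℂ) (B : Subalgebra S ℂ) (h : (A : Set ℂ) ⊆ B) {z : ℂ}
    (hz : IsAlgebraic A z) : IsAlgebraic B z := by
  let f : A →+* B := Subring.inclusion (S := A.toSubring) (T := B.toSubring) h
  let _ : Algebra A B := f.toAlgebra
  have : IsScalarTower A B ℂ := IsScalarTower.of_algebraMap_eq fun _ => rfl
  exact hz.extendScalars (R := A) (S := B) (fun a b hab => by
    apply Subtype.ext
    exact congrArg (fun y : B => (y : ℂ)) hab)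

lemma adjoin_subset_of {R S : Type*} [CommRing R] [CommRing S] [Algebra R ℂ] [Algebra S ℂ]
    (B : Subalgebra S ℂ) (s : Set ℂ) (h : s ⊆ B) (hR : ∀ r : R, algebraMap R ℂ r ∈ B) :
    (Algebra.adjoin R s : Set ℂ) ⊆ B := by
  intro z hz
  induction hz using Algebra.adjoin_induction with
  | mem x hx => exact h hx
  | algebraMap r => exact hR r
  | add x y _ _ hx hy => exact B.add_mem hx hy
  | mul x y _ _ hx hy => exact B.mul_mem hx hy

lemma exists_linear_generators (K : IntermediateField ℚ ℂ) (D X : Set ℂ) (hX : X.Finite) :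
    ∃ b : Finset ℂ, b.card ≤ linDimOver K D X ∧
      X ⊆ Submodule.span K ((b : Set ℂ) ∪ D) := by
  classical
  set q := (Submodule.span K D).mkQ with hq
  have hfin : Module.Finite K (Submodule.span K (q '' X)) :=
    Module.Finite.span_of_finite K (hX.image q)
  obtain ⟨t, hts, hcard, hspan, -⟩ := Submodule.exists_finset_span_eq_linearIndepOn K (q '' X)
  have hsurj : Function.Surjective q := Submodule.mkQ_surjective _
  refine ⟨t.image (Function.surjInv hsurj), ?_, ?_⟩
  · refine Finset.card_image_le.trans ?_
    rw [hcard, linDimOver, Submodule.map_span]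
  · intro z hz
    have h1 : q z ∈ Submodule.span K (t : Set (ℂ ⧸ Submodule.span K D)) := by
      rw [hspan]
      exact Submodule.subset_span ⟨z, hz, rfl⟩
    have h2 : (t : Set (ℂ ⧸ Submodule.span K D)) =
        q '' ((t.image (Function.surjInv hsurj) : Finset ℂ) : Set ℂ) := by
      rw [Finset.coe_image, ← Set.image_comp, (Function.rightInverse_surjInv hsurj).comp_eq_id,
        Set.image_id]
    rw [h2, ← Submodule.map_span] at h1
    obtain ⟨y, hy, hyz⟩ := h1
    have h3 : z - y ∈ Submodule.span K D := by
      rw [← Submodule.ker_mkQ (Submodule.span K D), LinearMap.mem_ker, map_sub, sub_eq_zero]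
      exact hyz.symm
    have h4 := Submodule.add_mem _ (Submodule.span_mono Set.subset_union_left hy)
      (Submodule.span_mono (Set.subset_union_right
        (s := ((t.image (Function.surjInv hsurj) : Finset ℂ) : Set ℂ))) h3)
    rwa [add_sub_cancel] at h4

lemma exists_trans_generators (C X : Set ℂ) (hX : X.Finite) :
    ∃ e : Finset ℂ, e.card ≤ trdegOver C X ∧
      ∀ z ∈ X, IsAlgebraic (Algebra.adjoin (IntermediateField.adjoin ℚ C) (e : Set ℂ)) z := by
  obtain ⟨e, he⟩ := (AlgebraicIndependent.matroid (IntermediateField.adjoin ℚ C) ℂ).exists_isBasis X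
  rw [AlgebraicIndependent.matroid_isBasis_iff] at he
  obtain ⟨h1, h2, h3⟩ := he
  have hef := hX.subset h2
  lift e to Finset ℂ using hef
  refine ⟨e, ?_, h3⟩
  refine le_csSup ⟨hX.toFinset.card, ?_⟩ ⟨e, h2, rfl, h1⟩
  rintro k ⟨t, ht, rfl, -⟩
  exact Finset.card_le_card fun a ha => by simpa using ht ha

/-- for a subfield `K` of ℂ and `D ⊆ ℂ` with `K ⊆ D`, for every
finite tuple `x` of complex numbers, `δ_K(x/D) ≥ δ_exp(x/D)`; equivalently
`lin.d._K(x/D) + trdeg(exp x / exp D) ≥ trdeg(x, exp x / D ∪ exp D)`. -/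
theorem statement5 (K : IntermediateField ℚ ℂ) (D : Set ℂ) (hKD : (K : Set ℂ) ⊆ D) :
    ∀ (n : ℕ) (x : Fin n → ℂ),
      linDimOver K D (Set.range x)
          + trdegOver (Complex.exp '' D) (Set.range fun i => Complex.exp (x i))
        ≥ trdegOver (D ∪ Complex.exp '' D)
            (Set.range x ∪ Set.range fun i => Complex.exp (x i)) := by
  intro n x
  obtain ⟨b, hb, hbx⟩ := exists_linear_generators K D (Set.range x) (Set.finite_range x)
  obtain ⟨e, he, hex⟩ := exists_trans_generators (Complex.exp '' D)
    (Set.range fun i => Complex.exp (x i)) (Set.finite_range _)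
  refine le_trans ?_ (Nat.add_le_add hb he)
  set L := IntermediateField.adjoin ℚ (D ∪ Complex.exp '' D) with hL
  have hDL : D ∪ Complex.exp '' D ⊆ (L : Set ℂ) := IntermediateField.subset_adjoin _ _
  set S := Algebra.adjoin L ((b : Set ℂ) ∪ e) with hS
  have hLS : ∀ z ∈ L, z ∈ S := fun z hz => S.algebraMap_mem ⟨z, hz⟩
  refine csSup_le ⟨0, ∅, by simp, rfl, ?_⟩ ?_
  · have : IsEmpty {y : ℂ // y ∈ (∅ : Finset ℂ)} := ⟨fun y => absurd y.2 (Finset.notMem_empty _)⟩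
    exact (algebraicIndependent_empty_type_iff).2 (algebraMap L ℂ).injective
  rintro k ⟨t, ht, rfl, hind⟩
  have hsub : (t : Set ℂ) ⊆ (AlgebraicIndependent.matroid L ℂ).closure ((b : Set ℂ) ∪ e) := by
    rw [AlgebraicIndependent.matroid_closure_eq]
    intro z hz
    change IsAlgebraic S z
    have hz' := ht hz
    clear hz
    rcases hz' with hz | hz
    · have h1 : z ∈ S := by
        have h2 := hbx hz
        clear hz
        induction h2 using Submodule.span_induction with
        | mem y hy =>
          rcases hy with hy | hy
          · exact Algebra.subset_adjoin (Or.inl hy)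
          · exact hLS _ (hDL (Or.inl hy))
        | zero => exact S.zero_mem
        | add y w _ _ hy hw => exact S.add_mem hy hw
        | smul a y _ hy =>
          exact S.mul_mem (hLS _ (hDL (Or.inl (hKD a.2)))) hy
      exact isAlgebraic_algebraMap (⟨z, h1⟩ : S)
    · refine isAlgebraic_of_subset _ S (adjoin_subset_of S _ ?_ ?_) (hex z hz)
      · exact fun y hy => Algebra.subset_adjoin (Or.inr hy)
      · rintro ⟨r, hr⟩
        refine hLS _ (IntermediateField.adjoin.mono ℚ _ _ Set.subset_union_right hr)
  have hI : (AlgebraicIndependent.matroid L ℂ).Indep (t : Set ℂ) := hind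
  have h1 := hI.encard_le_eRk_of_subset hsub
  rw [Matroid.eRk_closure_eq] at h1
  have h2 := (h1.trans (Matroid.eRk_le_encard _ _)).trans (Set.encard_union_le _ _)
  simp only [Set.encard_coe_eq_coe_finsetCard] at h2
  exact_mod_cast h2
end

section
/- Let β be a non-zero real number and let s ∈ ℝ^n. Define L_s = {(x, x̄) ∈ ℂ^n × ℂ^n : (x + x̄) + β⁻¹i(x − x̄) = 2s (coordinatewise)}. Let (m¹,n¹),…,(m^k,n^k) ∈ ℤ^{2n} be linearly independent vectors (with m^i, n^i ∈ ℤ^n), and let M : ℂ^{2n} → ℂ^k be the linear map sending (x, x̄) to the tuple (m^i·x + n^i·x̄)_{i=1,…,k}. Then the image M(L_s) is a coset of a ℂ-linear subspace of ℂ^k whose complex dimension d satisfies 2d ≥ k. -/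
open Complex

open scoped ComplexOrder in
/-- The entrywise conjugate of a complex matrix has the same rank. -/
lemma rank_conj_aux {n k : ℕ} (A : Matrix (Fin k) (Fin n) ℂ) :
    A.conjTranspose.transpose.rank = A.rank := by
  rw [Matrix.rank_transpose, Matrix.rank_conjTranspose]

/-- Integer vectors independent over `ℤ` give a complex matrix of full row rank. -/
lemma rank_int_aux {n k : ℕ} (v : Fin k → (Fin n ⊕ Fin n → ℤ))
    (hind : LinearIndependent ℤ v) :
    (Matrix.of fun i j => ((v i j : ℤ) : ℂ)).rank = k := by
  have h : LinearIndependent ℂ (fun i ↦ algebraMap ℤ ℂ ∘ v i) :=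
    linearIndependent_algebraMap_comp_iff.mpr hind
  have h' : LinearIndependent ℂ (Matrix.of fun i j => ((v i j : ℤ) : ℂ)).row := h
  rw [h'.rank_matrix, Fintype.card_fin]

/-- The rank bound: the matrix `a m₁ - b m₂` with `b = conj a` has rank at least `k / 2`. -/
lemma rank_bound (a b : ℂ) (hb : b = starRingEnd ℂ a) (n k : ℕ)
    (hD : b ^ 2 - a ^ 2 ≠ 0)
    (m₁ m₂ : Fin k → Fin n → ℤ)
    (hind : LinearIndependent ℤ
      (fun i => Sum.elim (m₁ i) (m₂ i) : Fin k → (Fin n ⊕ Fin n → ℤ)))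
    (A : Matrix (Fin k) (Fin n) ℂ)
    (hA : A = Matrix.of fun i j => a * (m₁ i j : ℂ) - b * (m₂ i j : ℂ)) :
    k ≤ 2 * A.rank := by
  obtain ⟨B, hBd⟩ : ∃ B : Matrix (Fin k) (Fin n) ℂ, B = A.conjTranspose.transpose := ⟨_, rfl⟩
  have hB : B.rank = A.rank := by
    rw [hBd, rank_conj_aux]
  have hBe : ∀ i j, B i j = b * (m₁ i j : ℂ) - a * (m₂ i j : ℂ) := by
    intro i j
    simp [hBd, hA, Matrix.conjTranspose_apply, hb]
  have hNr := rank_int_aux _ hind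
  obtain ⟨N, hN⟩ : ∃ N : Matrix (Fin k) (Fin n ⊕ Fin n) ℂ,
    N = Matrix.of fun i j => ((Sum.elim (m₁ i) (m₂ i) j : ℤ) : ℂ) := ⟨_, rfl⟩
  rw [← hN] at hNr
  have hle : LinearMap.range N.mulVecLin ≤
      LinearMap.range A.mulVecLin ⊔ LinearMap.range B.mulVecLin := by
    rintro _ ⟨w, rfl⟩
    rw [Submodule.mem_sup]
    let t : Fin n → ℂ := fun j => (-a * w (Sum.inl j) - b * w (Sum.inr j)) / (b ^ 2 - a ^ 2)
    let t' : Fin n → ℂ := fun j => (b * w (Sum.inl j) + a * w (Sum.inr j)) / (b ^ 2 - a ^ 2)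
    refine ⟨_, ⟨t, rfl⟩, _, ⟨t', rfl⟩, ?_⟩
    ext i
    simp only [Matrix.mulVecLin_apply, Pi.add_apply, Matrix.mulVec, dotProduct,
      Fintype.sum_sum_type, ← Finset.sum_add_distrib]
    refine Finset.sum_congr rfl fun j _ => ?_
    rw [hBe]
    simp only [hA, hN, t, t', Matrix.of_apply, Sum.elim_inl, Sum.elim_inr]
    field_simp
    ring
  have h1 := Submodule.finrank_mono hle
  have h2 := Submodule.finrank_add_le_finrank_add_finrank
    (LinearMap.range A.mulVecLin) (LinearMap.range B.mulVecLin)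
  rw [Matrix.rank] at hB hNr ⊢
  rw [Matrix.rank] at hB
  rw [hNr] at h1
  rw [hB] at h2
  omega

/-- for `L_s = {(x, x̄) : (x + x̄) + β⁻¹i(x − x̄) = 2s}` and `M`
the linear map given by `k` linearly independent integer vectors
`(m¹,n¹),…,(mᵏ,nᵏ) ∈ ℤ^{2n}`, the image `M(L_s)` is a coset of a ℂ-linear
subspace of `ℂ^k` of dimension `d` with `2d ≥ k`. -/
theorem statement7 (β : ℝ) (hβ : β ≠ 0) (n k : ℕ) (s : Fin n → ℝ)
    (m₁ m₂ : Fin k → Fin n → ℤ)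
    (hind : LinearIndependent ℤ
      (fun i => Sum.elim (m₁ i) (m₂ i) : Fin k → (Fin n ⊕ Fin n → ℤ))) :
    ∃ (W : Submodule ℂ (Fin k → ℂ)) (v : Fin k → ℂ),
      (fun p : (Fin n → ℂ) × (Fin n → ℂ) =>
          fun i => (∑ j, (m₁ i j : ℂ) * p.1 j) + ∑ j, (m₂ i j : ℂ) * p.2 j) ''
          {p : (Fin n → ℂ) × (Fin n → ℂ) |
            ∀ j, (p.1 j + p.2 j) + (β : ℂ)⁻¹ * I * (p.1 j - p.2 j) = 2 * s j}
        = (fun w => v + w) '' (W : Set (Fin k → ℂ))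
      ∧ k ≤ 2 * Module.finrank ℂ W := by
  have hc : (β : ℂ) ≠ 0 := by exact_mod_cast hβ
  obtain ⟨a, ha⟩ : ∃ a : ℂ, a = 1 - (β : ℂ)⁻¹ * I := ⟨_, rfl⟩
  have hb : starRingEnd ℂ a = 1 + (β : ℂ)⁻¹ * I := by
    simp [ha]
  have ha0 : a ≠ 0 := by
    intro h
    have := congrArg Complex.re h
    simp [ha, ← Complex.ofReal_inv] at this
  let A : Matrix (Fin k) (Fin n) ℂ :=
    Matrix.of fun i j => a * (m₁ i j : ℂ) - starRingEnd ℂ a * (m₂ i j : ℂ)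
  refine ⟨LinearMap.range A.mulVecLin,
    fun i => (∑ j, (m₁ i j : ℂ) * s j) + ∑ j, (m₂ i j : ℂ) * s j, ?_, ?_⟩
  · ext y
    constructor
    · rintro ⟨p, hp, rfl⟩
      refine ⟨_, ⟨fun j => (p.1 j - s j) / a, rfl⟩, ?_⟩
      ext i
      simp only [Matrix.mulVecLin_apply, Pi.add_apply, Matrix.mulVec, dotProduct,
        ← Finset.sum_add_distrib]
      refine Finset.sum_congr rfl fun j _ => ?_
      have h := hp j
      have h2 : p.2 j = s j - starRingEnd ℂ a * ((p.1 j - s j) / a) := by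
        have h3 : a * (p.2 j - s j) = -(starRingEnd ℂ a * (p.1 j - s j)) := by
          rw [hb, ha]
          linear_combination h
        field_simp
        linear_combination h3
      have h1 : p.1 j = s j + a * ((p.1 j - s j) / a) := by
        field_simp
        ring
      simp only [A, Matrix.of_apply]
      rw [h2]
      linear_combination (-(m₁ i j : ℂ)) * h1
    · rintro ⟨_, ⟨t, rfl⟩, rfl⟩
      refine ⟨(fun j => s j + a * t j, fun j => s j - starRingEnd ℂ a * t j), ?_, ?_⟩
      · intro j
        change (s j + a * t j + (s j - starRingEnd ℂ a * t j)) + (β : ℂ)⁻¹ * I *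
          (s j + a * t j - (s j - starRingEnd ℂ a * t j)) = 2 * s j
        rw [hb, ha]
        ring
      · ext i
        simp only [Matrix.mulVecLin_apply, Pi.add_apply, Matrix.mulVec, dotProduct,
          ← Finset.sum_add_distrib]
        refine Finset.sum_congr rfl fun j _ => ?_
        simp only [A, Matrix.of_apply]
        ring
  · refine rank_bound a _ rfl n k ?_ m₁ m₂ hind A rfl
    rw [hb, ha]
    have : (1 + (β : ℂ)⁻¹ * I) ^ 2 - (1 - (β : ℂ)⁻¹ * I) ^ 2 = 4 * ((β : ℂ)⁻¹ * I) := by ring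
    rw [this]
    simp [hc]
end

section
/- Let τ ∈ ℂ with Im(τ) ≠ 0 and set Λ = ℤ + τℤ. Let β be a non-zero real number, ε = 1 + βi, and K = ℚ(βi). Let t ∈ ℝ^n and set x = εt (coordinatewise). Assume lin.d._ℚ(x/Λ) = n, i.e. the coordinates of x are ℚ-linearly independent modulo the ℚ-span of {1, τ}. Then: (a) lin.d._ℚ(x, x^c / Λ) ≥ 2n − 2, i.e. dim_ℚ(span_ℚ(x₁,…,x_n, x₁^c,…,x_n^c, 1, τ)) − dim_ℚ(span_ℚ(1, τ)) ≥ 2n − 2; and (b) lin.d._K(x, x^c) ≤ n, where x^c denotes the coordinatewise complex conjugate of x. -/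
open Complex

/-- with `Λ = ℤ + τℤ`, `ε = 1 + βi`, `K = ℚ(βi)` and `x = εt`
for a real tuple `t`, if `lin.d._ℚ(x/Λ) = n` then
(a) `lin.d._ℚ(x, x^c/Λ) ≥ 2n − 2` and (b) `lin.d._K(x, x^c) ≤ n`. -/
theorem statement8 (τ : ℂ) (hτ : τ.im ≠ 0) (β : ℝ) (hβ : β ≠ 0)
    (ε : ℂ) (hε : ε = 1 + β * I)
    (K : IntermediateField ℚ ℂ) (hK : K = IntermediateField.adjoin ℚ {(β : ℂ) * I})
    (n : ℕ) (t : Fin n → ℝ) (x : Fin n → ℂ) (hx : ∀ i, x i = ε * t i)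
    (hmod : linDim ℚ (Set.range x ∪ {1, τ}) - linDim ℚ ({1, τ} : Set ℂ) = n) :
    (linDim ℚ (Set.range x ∪ Set.range (fun i => (starRingEnd ℂ) (x i)) ∪ {1, τ}) : ℤ)
          - linDim ℚ ({1, τ} : Set ℂ) ≥ 2 * n - 2
      ∧ linDim K (Set.range x ∪ Set.range fun i => (starRingEnd ℂ) (x i)) ≤ n := by
  have hfin : ∀ s : Set ℂ, s.Finite → Module.Finite ℚ (Submodule.span ℚ s) :=
    fun s hs => Module.Finite.span_of_finite ℚ hs
  have hf1 := hfin _ (Set.finite_range x)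
  have hf2 := hfin ({1, τ} : Set ℂ) (Set.toFinite _)
  have hf3 := hfin (Set.range x ∪ Set.range (fun i => (starRingEnd ℂ) (x i)) ∪ {1, τ})
    (Set.toFinite _)
  constructor
  · have h1 : n ≤ Module.finrank ℚ (Submodule.span ℚ (Set.range x)) := by
      unfold linDim at hmod
      rw [Submodule.span_union] at hmod
      have := Submodule.finrank_add_le_finrank_add_finrank (Submodule.span ℚ (Set.range x))
        (Submodule.span ℚ ({1, τ} : Set ℂ))
      omega
    have hli : LinearIndependent ℚ x := by
      rw [linearIndependent_iff_card_le_finrank_span]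
      simpa [Set.finrank] using h1
    let c : ℂ →ₗ[ℚ] ℂ := (starRingEnd ℂ).toAddMonoidHom.toRatLinearMap
    have hc : ∀ z, c z = (starRingEnd ℂ) z := fun z => rfl
    have hlic : LinearIndependent ℚ (fun i => (starRingEnd ℂ) (x i)) := by
      refine hli.map' c (LinearMap.ker_eq_bot.2 ?_)
      exact (starRingEnd ℂ).injective
    have hspan : ∀ (e : ℂ) (y : Fin n → ℂ), (∀ i, y i = e * t i) →
        ∀ z ∈ Submodule.span ℚ (Set.range y), ∃ r : ℝ, z = e * r := by
      intro e y hy z hz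
      induction hz using Submodule.span_induction with
      | mem z hz => obtain ⟨i, rfl⟩ := hz; exact ⟨t i, hy i⟩
      | zero => exact ⟨0, by simp⟩
      | add a b _ _ ha hb =>
        obtain ⟨r, rfl⟩ := ha
        obtain ⟨s, rfl⟩ := hb
        exact ⟨r + s, by push_cast; ring⟩
      | smul q a _ ha =>
        obtain ⟨r, rfl⟩ := ha
        exact ⟨q * r, by rw [Rat.smul_def]; push_cast; ring⟩
    have hdis : Disjoint (Submodule.span ℚ (Set.range x))
        (Submodule.span ℚ (Set.range (fun i => (starRingEnd ℂ) (x i)))) := by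
      rw [Submodule.disjoint_def]
      intro z h1 h2
      obtain ⟨r, hr⟩ := hspan ε x hx z h1
      obtain ⟨s, hs⟩ := hspan ((starRingEnd ℂ) ε) _ (fun i => by simp [hx]) z h2
      have h := hr.symm.trans hs
      rw [hε] at h
      have hre := congrArg Complex.re h
      have him := congrArg Complex.im h
      simp at hre him
      have hr0 : r = 0 := by
        have : β * r = 0 := by rw [← hre] at him; linarith
        exact (mul_eq_zero.1 this).resolve_left hβ
      rw [hr, hr0]; simp
    have hsum := hli.sum_type hlic hdis
    have hcard := finrank_span_eq_card hsum
    rw [Set.Sum.elim_range] at hcard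
    simp only [Fintype.card_sum, Fintype.card_fin] at hcard
    have hle : Module.finrank ℚ (Submodule.span ℚ
        (Set.range x ∪ Set.range (fun i => (starRingEnd ℂ) (x i)))) ≤
        Module.finrank ℚ (Submodule.span ℚ
        (Set.range x ∪ Set.range (fun i => (starRingEnd ℂ) (x i)) ∪ {1, τ})) :=
      Submodule.finrank_mono (Submodule.span_mono Set.subset_union_left)
    have h2 : Module.finrank ℚ (Submodule.span ℚ ({1, τ} : Set ℂ)) ≤ 2 := by
      have := finrank_span_finset_le_card (R := ℚ) ({1, τ} : Finset ℂ)
      have h3 := Finset.card_le_two (a := (1:ℂ)) (b := τ)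
      have h4 : ((({1, τ} : Finset ℂ)) : Set ℂ) = {1, τ} := by ext z; simp
      rw [h4] at this
      exact this.trans h3
    unfold linDim
    omega
  · have hmem : (β : ℂ) * I ∈ K := by
      rw [hK]; exact IntermediateField.mem_adjoin_simple_self ℚ _
    have hT : Module.Finite K (Submodule.span K (Set.range fun i => (t i : ℂ))) :=
      Module.Finite.span_of_finite K (Set.finite_range _)
    have hb : ∀ k ∈ K, ∀ i, k * (t i : ℂ) ∈ Submodule.span K (Set.range fun i => (t i : ℂ)) := by
      intro k hk i
      exact Submodule.smul_mem _ (⟨k, hk⟩ : K) (Submodule.subset_span ⟨i, rfl⟩)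
    have hle : Submodule.span K (Set.range x ∪ Set.range fun i => (starRingEnd ℂ) (x i)) ≤
        Submodule.span K (Set.range fun i => (t i : ℂ)) := by
      rw [Submodule.span_le]
      rintro z (⟨i, rfl⟩ | ⟨i, rfl⟩)
      · rw [hx, hε]
        exact hb _ (K.add_mem K.one_mem hmem) i
      · have : (starRingEnd ℂ) (x i) = (1 - (β : ℂ) * I) * t i := by
          rw [hx, hε]; simp only [map_mul, map_add, map_one, conj_ofReal, conj_I]; ring
        simp only [this]
        exact hb _ (K.sub_mem K.one_mem hmem) i
    refine (Submodule.finrank_mono hle).trans ?_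
    simpa [Set.finrank] using finrank_range_le_card (R := K) (fun i => (t i : ℂ))
end

section
/- Let τ ∈ ℂ with Im(τ) ≠ 0 and set Λ = ℤ + τℤ. Let ε ∈ ℂ with Im(ε) ≠ 0 and suppose εℝ ∩ Λ = {0}. Set α = Re(τ) − (Re(ε)/Im(ε))·Im(τ). Then α is irrational, the sets εℝ + Λ and εℝ + ℤ + αℤ coincide as subsets of ℂ, and εℝ + Λ is dense in ℂ. -/
open Complex

/-- for `Λ = ℤ + τℤ` (with `τ` non-real) and `ε` non-real with
`εℝ ∩ Λ = {0}`, the number `α = Re(τ) − (Re(ε)/Im(ε))·Im(τ)` is irrational,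
`εℝ + Λ = εℝ + ℤ + αℤ`, and `εℝ + Λ` is dense in ℂ. -/
theorem statement9 (τ : ℂ) (hτ : τ.im ≠ 0) (ε : ℂ) (hε : ε.im ≠ 0)
    (hcap : {z : ℂ | ∃ t : ℝ, z = ε * t} ∩ {z : ℂ | ∃ a b : ℤ, z = a + b * τ} = {0})
    (α : ℝ) (hα : α = τ.re - (ε.re / ε.im) * τ.im) :
    Irrational α
      ∧ {z : ℂ | ∃ t : ℝ, ∃ a b : ℤ, z = ε * t + a + b * τ}
          = {z : ℂ | ∃ t : ℝ, ∃ a b : ℤ, z = ε * t + a + b * (α : ℂ)}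
      ∧ Dense {z : ℂ | ∃ t : ℝ, ∃ a b : ℤ, z = ε * t + a + b * τ} := by
  have hτα : τ = α + ε * ((τ.im / ε.im : ℝ) : ℂ) := by
    apply Complex.ext
    · simp [hα]
      ring
    · simp
      field_simp
  set s : ℝ := τ.im / ε.im with hs
  have hirr : Irrational α := by
    rintro ⟨q, hq⟩
    have hd : (q.den : ℝ) ≠ 0 := by exact_mod_cast q.den_nz
    have hqα : (q.den : ℝ) * α = q.num := by
      rw [← hq]
      exact_mod_cast Rat.den_mul_eq_num q
    have hqα' : (q.den : ℂ) * (α : ℂ) = q.num := by exact_mod_cast congrArg (fun x : ℝ => (x : ℂ)) hqα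
    have hmem : ε * (((q.den : ℝ) * s : ℝ) : ℂ) ∈
        {z : ℂ | ∃ t : ℝ, z = ε * t} ∩ {z : ℂ | ∃ a b : ℤ, z = a + b * τ} := by
      refine ⟨⟨_, rfl⟩, -q.num, (q.den : ℤ), ?_⟩
      rw [hτα]
      push_cast
      linear_combination (-1 : ℂ) * hqα'
    rw [hcap] at hmem
    have h0 : ε * (((q.den : ℝ) * s : ℝ) : ℂ) = 0 := hmem
    rcases mul_eq_zero.mp h0 with h | h
    · exact hε (by simp [h])
    · have h' : (q.den : ℝ) * s = 0 := by exact_mod_cast h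
      exact mul_ne_zero hd (div_ne_zero hτ hε) h'
  have hset : {z : ℂ | ∃ t : ℝ, ∃ a b : ℤ, z = ε * t + a + b * τ}
          = {z : ℂ | ∃ t : ℝ, ∃ a b : ℤ, z = ε * t + a + b * (α : ℂ)} := by
    ext z
    constructor
    · rintro ⟨t, a, b, rfl⟩
      refine ⟨t + b * s, a, b, ?_⟩
      push_cast
      linear_combination (b : ℂ) * hτα
    · rintro ⟨t, a, b, rfl⟩
      refine ⟨t - b * s, a, b, ?_⟩
      push_cast
      linear_combination (-b : ℂ) * hτα
  refine ⟨hirr, hset, ?_⟩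
  rw [hset]
  have hdense : Dense (AddSubgroup.closure {α, 1} : Set ℝ) :=
    dense_addSubgroupClosure_pair_iff.mpr (by simpa using hirr)
  intro z
  let g : ℝ → ℂ := fun r => ε * ((z.im / ε.im : ℝ) : ℂ) + r
  have hg : Continuous g := by fun_prop
  have hz : z = g (z.re - ε.re * (z.im / ε.im)) := by
    apply Complex.ext
    · simp [g]
    · simp [g]
      field_simp
  rw [hz]
  refine map_mem_closure hg (hdense _) ?_
  intro r hr
  obtain ⟨b, a, rfl⟩ := AddSubgroup.mem_closure_pair.mp hr
  refine ⟨z.im / ε.im, a, b, ?_⟩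
  simp [g]
  ring
end

section
/- Let β be a non-zero real number, let ε = 1 + βi, let K = ℚ(βi), and let Q be a non-trivial divisible subgroup of (ℝ,+) of finite ℚ-linear dimension. Let G = {exp(εt + q) : t ∈ ℝ, q ∈ Q} ⊆ ℂ*. Assume SC_K holds. Then for every finite tuple c of elements of ℂ* there exists a finite tuple c' of elements of ℂ* extending c such that for every finite tuple y of elements of ℂ*: 2·trdeg(y / ℚ(c')) − (r(y, c') − r(c')) ≥ 0, where for a tuple z, r(z) = dim_ℚ(ℚ ⊗_ℤ (D(z) ∩ G)) with D(z) the divisible hull {w ∈ ℂ* : w^m lies in the multiplicative subgroup generated by the coordinates of z for some integer m ≥ 1}, and r(y, c') is this quantity for the concatenated tuple. Moreover, if all coordinates of c lie in G, then c' can be chosen with all coordinates in G. -/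
open Complex TensorProduct

lemma aux_qRank_eq (H : Subgroup ℂˣ) : qRank H = Module.finrank ℤ (Additive ↥H) :=
  (TensorProduct.isBaseChange ℤ (Additive ↥H) ℚ).finrank_eq

lemma aux_exists_indep (H : Subgroup ℂˣ) : ∃ v : Fin (qRank H) → ℂˣ, (∀ i, v i ∈ H) ∧
    LinearIndependent ℤ (fun i => Additive.ofMul (v i)) := by
  rw [aux_qRank_eq]
  obtain ⟨f, hf⟩ := exists_linearIndependent_of_le_finrank
    (R := ℤ) (M := Additive ↥H) (n := Module.finrank ℤ (Additive ↥H)) le_rfl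
  refine ⟨fun i => ((f i).toMul : ℂˣ), fun i => (f i).toMul.2, ?_⟩
  have := hf.map' (MonoidHom.toAdditive H.subtype).toIntLinearMap (by
    rw [LinearMap.ker_eq_bot]
    intro a b h
    exact Subtype.ext h)
  exact this

lemma aux_mem_span {S : Set ℂˣ} {u : ℂˣ} (h : u ∈ Subgroup.closure S) :
    Additive.ofMul u ∈ Submodule.span ℤ (Additive.toMul ⁻¹' S) := by
  induction h using Subgroup.closure_induction with
  | mem x hx => exact Submodule.subset_span hx
  | one => exact Submodule.zero_mem _
  | mul x y _ _ h1 h2 => exact Submodule.add_mem _ h1 h2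
  | inv x _ h1 => exact Submodule.neg_mem _ h1

lemma aux_card_le {S : Set ℂˣ} (hS : S.Finite) {n : ℕ} (v : Fin n → ℂˣ)
    (hv : ∀ i, v i ∈ divHull S) (hi : LinearIndependent ℤ (fun i => Additive.ofMul (v i))) :
    n ≤ Nat.card S := by
  choose m hm1 hm2 using hv
  have hS' : (Additive.toMul ⁻¹' S : Set (Additive ℂˣ)).Finite :=
    hS.preimage Additive.toMul.injective.injOn
  have hli : LinearIndependent ℤ (fun i => (m i : ℤ) • Additive.ofMul (v i)) := by
    rw [Fintype.linearIndependent_iff] at hi ⊢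
    intro g hg i
    have := hi (fun i => g i * m i) (by simpa [mul_smul] using hg) i
    have h2 : (m i : ℤ) ≠ 0 := by have := hm1 i; omega
    exact (mul_eq_zero.mp this).resolve_right h2
  have : Fintype (Additive.toMul ⁻¹' S : Set (Additive ℂˣ)) := hS'.fintype
  have h3 := linearIndependent_le_span' _ hli (Additive.toMul ⁻¹' S) (by
    rintro _ ⟨i, rfl⟩
    have := aux_mem_span (hm2 i)
    simpa using this)
  rw [← Nat.card_eq_fintype_card] at h3
  have h4 : Nat.card (Additive.toMul ⁻¹' S : Set (Additive ℂˣ)) = Nat.card S := 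
    Nat.card_congr (Additive.toMul.subtypeEquiv (fun a => Iff.rfl))
  rw [h4] at h3
  simpa using h3

lemma aux_le_qRank {S : Set ℂˣ} (hS : S.Finite) (H : Subgroup ℂˣ) (hH : H ≤ divHull S) {n : ℕ}
    (v : Fin n → ℂˣ) (hv : ∀ i, v i ∈ H)
    (hi : LinearIndependent ℤ (fun i => Additive.ofMul (v i))) : n ≤ qRank H := by
  rw [aux_qRank_eq]
  let φ := (MonoidHom.toAdditive H.subtype).toIntLinearMap
  have hφ : LinearMap.ker φ = ⊥ := by
    rw [LinearMap.ker_eq_bot]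
    intro a b h
    exact Subtype.ext h
  have hli : LinearIndependent ℤ (fun i => (Additive.ofMul ⟨v i, hv i⟩ : Additive ↥H)) :=
    LinearIndependent.of_comp φ hi
  have hfin : Module.rank ℤ (Additive ↥H) < Cardinal.aleph0 := by
    by_contra hcon
    push Not at hcon
    obtain ⟨f, hf⟩ := exists_linearIndependent_of_le_rank
      (R := ℤ) (M := Additive ↥H) (n := Nat.card S + 1)
      ((Cardinal.natCast_lt_aleph0).le.trans hcon)
    have := aux_card_le hS (fun i => ((f i).toMul : ℂˣ)) (fun i => hH (f i).toMul.2)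
      (hf.map' φ hφ)
    omega
  have := hli.cardinal_le_rank
  rw [Cardinal.mk_fin] at this
  rw [Module.finrank, ← Cardinal.toNat_natCast n]
  exact Cardinal.toNat_le_toNat this hfin

lemma aux_trdeg_eRk (s : Set ℂ) (hs : s.Finite) :
    (trdeg s : ℕ∞) = (AlgebraicIndependent.matroid ℚ ℂ).eRk s := by
  set M := AlgebraicIndependent.matroid ℚ ℂ
  obtain ⟨I, hI⟩ := M.exists_isBasis' s
  have hIf := hs.subset hI.subset
  rw [hI.eRk_eq_encard, hIf.encard_eq_coe_toFinset_card]
  congr 1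
  have key : IsGreatest {k : ℕ | ∃ t : Finset ℂ, ↑t ⊆ s ∧ t.card = k ∧
      AlgebraicIndependent ℚ (fun x : {y : ℂ // y ∈ t} => (x : ℂ))} hIf.toFinset.card := by
    constructor
    · refine ⟨hIf.toFinset, by simpa using hI.subset, rfl, ?_⟩
      have : M.Indep (hIf.toFinset : Set ℂ) := by simpa using hI.indep
      exact this
    · rintro k ⟨t, ht, rfl, hi⟩
      have h1 : M.Indep (t : Set ℂ) := hi
      have h2 := M.eRk_mono ht
      rw [h1.eRk_eq_encard, hI.eRk_eq_encard, hIf.encard_eq_coe_toFinset_card,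
        Set.encard_coe_eq_coe_finsetCard] at h2
      exact_mod_cast h2
  exact key.csSup_eq

open IntermediateField.algebraAdjoinAdjoin in
lemma aux_alg (C I : Set ℂ) (x : ℂ)
    (hx : IsAlgebraic (Algebra.adjoin (IntermediateField.adjoin ℚ C) I) x) :
    IsAlgebraic (Algebra.adjoin ℚ (C ∪ I)) x := by
  rw [IsFractionRing.isAlgebraic_iff (Algebra.adjoin ℚ (C ∪ I))
    (IntermediateField.adjoin ℚ (C ∪ I)) ℂ]
  have hle : ∀ z ∈ Algebra.adjoin (IntermediateField.adjoin ℚ C) I,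
      z ∈ IntermediateField.adjoin ℚ (C ∪ I) := by
    intro z hz
    induction hz using Algebra.adjoin_induction with
    | mem z hz => exact IntermediateField.subset_adjoin _ _ (Or.inr hz)
    | algebraMap r =>
      exact IntermediateField.adjoin.mono ℚ _ _ Set.subset_union_left r.2
    | add a b _ _ h1 h2 => exact add_mem h1 h2
    | mul a b _ _ h1 h2 => exact mul_mem h1 h2
  let φ : ↥(Algebra.adjoin (IntermediateField.adjoin ℚ C) I) →+*
      ↥(IntermediateField.adjoin ℚ (C ∪ I)) :=
    (Subalgebra.val _).toRingHom.codRestrict (IntermediateField.adjoin ℚ (C ∪ I))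
      (fun z => hle z z.2)
  obtain ⟨p, hp, hpx⟩ := hx
  have hinj : Function.Injective φ := by
    intro a b h
    exact Subtype.ext (congrArg (fun z : ↥(IntermediateField.adjoin ℚ (C ∪ I)) => (z : ℂ)) h)
  refine ⟨p.map φ, (Polynomial.map_ne_zero_iff hinj).mpr hp, ?_⟩
  rw [Polynomial.aeval_def, Polynomial.eval₂_map]
  exact hpx

lemma aux_trdegOver (C s : Set ℂ) (hC : C.Finite) (hs : s.Finite) :
    trdeg (C ∪ s) ≤ trdeg C + trdegOver C s := by
  have h0 : ((trdeg (C ∪ s) : ℕ) : ℕ∞) ≤ trdeg C + trdegOver C s := by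
    rw [aux_trdeg_eRk _ (hC.union hs), aux_trdeg_eRk _ hC]
    set M := AlgebraicIndependent.matroid ℚ ℂ with hM
    set N := AlgebraicIndependent.matroid (IntermediateField.adjoin ℚ C) ℂ with hN
    obtain ⟨I, hI⟩ := N.exists_isBasis' s
    have hIf := hs.subset hI.subset
    have hle : hIf.toFinset.card ≤ trdegOver C s := by
      refine le_csSup ⟨hs.toFinset.card, ?_⟩ ⟨hIf.toFinset, by simpa using hI.subset, rfl, ?_⟩
      · rintro k ⟨t, ht, rfl, -⟩
        exact Finset.card_le_card (by intro x hx; simpa using ht hx)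
      · have : N.Indep (hIf.toFinset : Set ℂ) := by simpa using hI.indep
        exact this
    have hsub : s ⊆ M.closure (C ∪ I) := by
      intro x hx
      have hx2 : x ∈ N.closure I := hI.closure_eq_closure ▸ N.subset_closure s (by simp [hN]) hx
      rw [hN, AlgebraicIndependent.matroid_closure_eq] at hx2
      rw [hM, AlgebraicIndependent.matroid_closure_eq]
      exact aux_alg C I x hx2
    calc M.eRk (C ∪ s) ≤ M.eRk (M.closure (C ∪ I)) := M.eRk_mono (Set.union_subset
            (Set.subset_union_left.trans (M.subset_closure _ (by simp [hM]))) hsub)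
      _ = M.eRk (C ∪ I) := M.eRk_closure_eq _
      _ ≤ M.eRk C + M.eRk I := M.eRk_union_le_eRk_add_eRk _ _
      _ ≤ M.eRk C + I.encard := by gcongr; exact M.eRk_le_encard _
      _ ≤ _ := by
        gcongr
        rw [hIf.encard_eq_coe_toFinset_card]
        exact_mod_cast hle
  exact_mod_cast h0

lemma aux_trdeg_mono_cl {s t : Set ℂ} (hs : s.Finite) (ht : t.Finite)
    (h : s ⊆ (AlgebraicIndependent.matroid ℚ ℂ).closure t) : trdeg s ≤ trdeg t := by
  have h0 : ((trdeg s : ℕ) : ℕ∞) ≤ trdeg t := by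
    rw [aux_trdeg_eRk _ hs, aux_trdeg_eRk _ ht, ← Matroid.eRk_closure_eq _ t]
    exact Matroid.eRk_mono _ h
  exact_mod_cast h0

lemma aux_trdeg_union {s t : Set ℂ} (hs : s.Finite) (ht : t.Finite) :
    trdeg (s ∪ t) ≤ trdeg s + trdeg t := by
  have h0 : ((trdeg (s ∪ t) : ℕ) : ℕ∞) ≤ trdeg s + trdeg t := by
    rw [aux_trdeg_eRk _ hs, aux_trdeg_eRk _ ht, aux_trdeg_eRk _ (hs.union ht)]
    exact Matroid.eRk_union_le_eRk_add_eRk _ _ _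
  exact_mod_cast h0

lemma aux_trdeg_conj_le {s : Set ℂ} (hs : s.Finite) :
    trdeg (starRingEnd ℂ '' s) ≤ trdeg s := by
  have h0 : ((trdeg (starRingEnd ℂ '' s) : ℕ) : ℕ∞) ≤ trdeg s := by
    rw [aux_trdeg_eRk _ hs, aux_trdeg_eRk _ (hs.image _)]
    obtain ⟨I, hI⟩ := (AlgebraicIndependent.matroid ℚ ℂ).exists_isBasis' (starRingEnd ℂ '' s)
    rw [hI.eRk_eq_encard, ← ((starRingEnd ℂ).injective.encard_image I)]
    have h1 : (AlgebraicIndependent.matroid ℚ ℂ).Indep (starRingEnd ℂ '' I) := by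
      have h2 : AlgebraicIndependent ℚ ((↑) : I → ℂ) := hI.indep
      have h3 := h2.map' (f := (starRingEnd ℂ).toRatAlgHom) (starRingEnd ℂ).injective
      have h4 := h3.to_subtype_range
      rw [Set.range_comp, Subtype.range_coe] at h4
      exact h4
    rw [← h1.eRk_eq_encard]
    apply Matroid.eRk_mono
    rintro _ ⟨z, hz, rfl⟩
    obtain ⟨w, hw, rfl⟩ := hI.subset hz
    simpa using hw
  exact_mod_cast h0

open IntermediateField.algebraAdjoinAdjoin in
lemma aux_divHull_closure (S : Set ℂˣ) (u : ℂˣ) (hu : u ∈ divHull S) :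
    (u : ℂ) ∈ (AlgebraicIndependent.matroid ℚ ℂ).closure ((fun v : ℂˣ => (v : ℂ)) '' S) := by
  set T := (fun v : ℂˣ => (v : ℂ)) '' S
  rw [AlgebraicIndependent.matroid_closure_eq]
  obtain ⟨m, hm, h⟩ := hu
  change IsAlgebraic (Algebra.adjoin ℚ T) (u : ℂ)
  rw [IsFractionRing.isAlgebraic_iff (Algebra.adjoin ℚ T) (IntermediateField.adjoin ℚ T) ℂ]
  have key : ∀ w ∈ Subgroup.closure S, (w : ℂ) ∈ IntermediateField.adjoin ℚ T := by
    intro w hw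
    induction hw using Subgroup.closure_induction with
    | mem x hx => exact IntermediateField.subset_adjoin _ _ ⟨x, hx, rfl⟩
    | one => exact one_mem _
    | mul x y _ _ h1 h2 => simpa using mul_mem h1 h2
    | inv x _ h1 => simpa using inv_mem h1
  have h1 := key _ h
  refine IsAlgebraic.of_pow (n := m) hm ?_
  have h2 : IsAlgebraic (IntermediateField.adjoin ℚ T)
    (algebraMap (IntermediateField.adjoin ℚ T) ℂ ⟨_, h1⟩) := isAlgebraic_algebraMap _
  simpa using h2

lemma aux_x_indep {n : ℕ} (x : Fin n → ℂ)
    (hi : LinearIndependent ℤ (fun i => Additive.ofMul (cexpU (x i)))) :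
    LinearIndependent ℚ x := by
  rw [← LinearIndependent.iff_fractionRing ℤ ℚ]
  let ψ : ℂ →+ Additive ℂˣ :=
    { toFun := fun z => Additive.ofMul (cexpU z)
      map_zero' := by rw [cexpU_zero]; rfl
      map_add' := fun a b => by rw [cexpU_add]; rfl }
  exact LinearIndependent.of_comp ψ.toIntLinearMap hi

lemma aux_dimK (K : IntermediateField ℚ ℂ) {n l : ℕ} (β : ℝ) (hβK : (β : ℂ) * I ∈ K)
    (t q : Fin n → ℝ) (b : Fin l → ℝ) (hq : ∀ i, q i ∈ Submodule.span ℚ (Set.range b))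
    (s : Set ℂ) (hs : ∀ z ∈ s, ∃ i, z = (1 + β * I) * t i + q i ∨ z = (1 - β * I) * t i + q i) :
    linDim K s ≤ n + l := by
  unfold linDim
  let e : Fin n ⊕ Fin l → ℂ := Sum.elim (fun i => (t i : ℂ)) (fun j => (b j : ℂ))
  have hb : ∀ i, ((q i : ℝ) : ℂ) ∈ Submodule.span K (Set.range e) := by
    intro i
    obtain ⟨c, hc⟩ := (Submodule.mem_span_range_iff_exists_fun ℚ).mp (hq i)
    rw [← hc, Complex.ofReal_sum]
    refine Submodule.sum_mem _ fun j _ => ?_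
    have : ((c j • b j : ℝ) : ℂ) = (c j : K) • ((b j : ℝ) : ℂ) := by
      rw [Rat.smul_def]; push_cast; rw [IntermediateField.smul_def]; simp
    rw [this]
    exact Submodule.smul_mem _ _ (Submodule.subset_span ⟨Sum.inr j, rfl⟩)
  have ht : ∀ i, ∀ k ∈ K, k * (t i : ℂ) ∈ Submodule.span K (Set.range e) := by
    intro i k hk
    exact Submodule.smul_mem _ (⟨k, hk⟩ : K) (Submodule.subset_span ⟨Sum.inl i, rfl⟩)
  have hsub : Submodule.span K s ≤ Submodule.span K (Set.range e) := by
    rw [Submodule.span_le]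
    intro z hz
    obtain ⟨i, rfl | rfl⟩ := hs z hz
    · exact Submodule.add_mem _ (ht i _ (add_mem (one_mem _) hβK)) (hb i)
    · exact Submodule.add_mem _ (ht i _ (sub_mem (one_mem _) hβK)) (hb i)
  have : Module.Finite K (Submodule.span K (Set.range e)) :=
    Module.Finite.span_of_finite _ (Set.finite_range e)
  calc _ ≤ Module.finrank K (Submodule.span K (Set.range e)) := Submodule.finrank_mono hsub
    _ ≤ Fintype.card (Fin n ⊕ Fin l) := finrank_range_le_card e
    _ = n + l := by simp

lemma aux_dimQ {n l : ℕ} (β : ℝ) (hβ : β ≠ 0)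
    (t q : Fin n → ℝ) (b : Fin l → ℝ) (hq : ∀ i, q i ∈ Submodule.span ℚ (Set.range b))
    (hx : LinearIndependent ℚ (fun i => (1 + β * I) * (t i : ℂ) + q i))
    (s : Set ℂ) (hsf : s.Finite)
    (hs1 : ∀ i, (1 + β * I) * (t i : ℂ) + q i ∈ s)
    (hs2 : ∀ i, (1 - β * I) * (t i : ℂ) + q i ∈ s) :
    2 * n ≤ linDim ℚ s + 3 * l := by
  unfold linDim
  set B := Submodule.span ℚ (Set.range b) with hB
  set T := Submodule.span ℚ (Set.range t) with hT
  set W := Submodule.span ℚ (Set.range (fun i => t i + q i)) with hW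
  have fB : Module.Finite ℚ B := Module.Finite.span_of_finite _ (Set.finite_range _)
  have fT : Module.Finite ℚ T := Module.Finite.span_of_finite _ (Set.finite_range _)
  have fW : Module.Finite ℚ W := Module.Finite.span_of_finite _ (Set.finite_range _)
  have fS : Module.Finite ℚ (Submodule.span ℚ s) := Module.Finite.span_of_finite _ hsf
  have hBl : Module.finrank ℚ B ≤ l := by
    have := finrank_range_le_card (R := ℚ) b
    rwa [Fintype.card_fin] at this
  let ι : ℝ →ₗ[ℚ] ℂ := (Complex.ofRealCLM : ℝ →ₗ[ℝ] ℂ).restrictScalars ℚ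
  have hι : ∀ r, ι r = (r : ℂ) := fun r => rfl
  have hιi : Function.Injective ι := Complex.ofReal_injective
  let μ (z : ℂ) : ℂ →ₗ[ℚ] ℂ := LinearMap.mulLeft ℚ z
  have h1 : n ≤ Module.finrank ℚ T + l := by
    have hle : Submodule.span ℚ (Set.range fun i => (1 + β * I) * (t i : ℂ) + q i) ≤
        T.map (μ (1 + β * I) ∘ₗ ι) ⊔ B.map ι := by
      rw [Submodule.span_le]
      rintro _ ⟨i, rfl⟩
      exact Submodule.add_mem_sup ⟨t i, Submodule.subset_span ⟨i, rfl⟩, rfl⟩ ⟨q i, hq i, rfl⟩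
    have h2 := Submodule.finrank_mono hle
    rw [finrank_span_eq_card hx, Fintype.card_fin] at h2
    have h3 := Submodule.finrank_add_le_finrank_add_finrank
      (T.map (μ (1 + β * I) ∘ₗ ι)) (B.map ι)
    have h4 := Submodule.finrank_map_le (μ (1 + β * I) ∘ₗ ι) T
    have h5 := Submodule.finrank_map_le ι B
    omega
  have h2 : Module.finrank ℚ T ≤ Module.finrank ℚ W + l := by
    have hle : T ≤ W ⊔ B := by
      rw [hT, Submodule.span_le]
      rintro _ ⟨i, rfl⟩
      have : t i = (t i + q i) + (- q i) := by ring
      rw [this]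
      exact Submodule.add_mem_sup (Submodule.subset_span ⟨i, rfl⟩) (B.neg_mem (hq i))
    have h2 := Submodule.finrank_mono hle
    have h3 := Submodule.finrank_add_le_finrank_add_finrank W B
    omega
  have h3 : Module.finrank ℚ W + Module.finrank ℚ T ≤ Module.finrank ℚ (Submodule.span ℚ s) := by
    have e1 : Module.finrank ℚ (W.map ι) = Module.finrank ℚ W :=
      (Submodule.equivMapOfInjective ι hιi W).finrank_eq.symm
    have hinj : Function.Injective (μ (β * I) ∘ₗ ι) := by
      intro a b' h
      have h' : (β * I) * (a : ℂ) = (β * I) * (b' : ℂ) := h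
      have hne : (β : ℂ) * I ≠ 0 := by simp [hβ]
      exact Complex.ofReal_injective (mul_left_cancel₀ hne h')
    have e2 : Module.finrank ℚ (T.map (μ (β * I) ∘ₗ ι)) = Module.finrank ℚ T :=
      (Submodule.equivMapOfInjective _ hinj T).finrank_eq.symm
    have hdisj : W.map ι ⊓ T.map (μ (β * I) ∘ₗ ι) = ⊥ := by
      rw [eq_bot_iff]
      rintro z ⟨⟨a, -, ha⟩, ⟨c, -, hc⟩⟩
      have ha' : (a : ℂ) = z := ha
      have hc' : (β * I) * (c : ℂ) = z := hc
      rw [← ha'] at hc'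
      have := congrArg Complex.re hc'
      simp at this
      rw [← ha', ← this]; simp
    have hsup := Submodule.finrank_sup_add_finrank_inf_eq (W.map ι) (T.map (μ (β * I) ∘ₗ ι))
    rw [hdisj, finrank_bot, e1, e2] at hsup
    have hle : W.map ι ⊔ T.map (μ (β * I) ∘ₗ ι) ≤ Submodule.span ℚ s := by
      have hA := fun i => Submodule.subset_span (R := ℚ) (hs1 i)
      have hA' := fun i => Submodule.subset_span (R := ℚ) (hs2 i)
      apply sup_le
      · rw [hW, Submodule.map_span, Submodule.span_le]
        rintro _ ⟨_, ⟨i, rfl⟩, rfl⟩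
        have := Submodule.smul_mem _ (1/2 : ℚ) (Submodule.add_mem _ (hA i) (hA' i))
        have h : ι (t i + q i) = (1/2 : ℚ) • (((1 + β * I) * (t i : ℂ) + q i) +
            ((1 - β * I) * (t i : ℂ) + q i)) := by
          rw [hι, Rat.smul_def]; push_cast; ring
        rw [h]; exact this
      · rw [hT, Submodule.map_span, Submodule.span_le]
        rintro _ ⟨_, ⟨i, rfl⟩, rfl⟩
        have := Submodule.smul_mem _ (1/2 : ℚ) (Submodule.sub_mem _ (hA i) (hA' i))
        have h : (μ (β * I) ∘ₗ ι) (t i) = (1/2 : ℚ) • (((1 + β * I) * (t i : ℂ) + q i) -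
            ((1 - β * I) * (t i : ℂ) + q i)) := by
          rw [Rat.smul_def]
          change (β * I) * (t i : ℂ) = _
          push_cast; ring
        rw [h]; exact this
    have := Submodule.finrank_mono hle
    omega
  omega

lemma aux_bound (β : ℝ) (hβ : β ≠ 0) (ε : ℂ) (hε : ε = 1 + β * I)
    (K : IntermediateField ℚ ℂ) (hK : K = IntermediateField.adjoin ℚ {(β : ℂ) * I})
    (Q : AddSubgroup ℝ)
    (l : ℕ) (hl : Module.rank ℚ (Submodule.span ℚ (Q : Set ℝ)) = l)
    (hSC : ∀ (m : ℕ) (x : Fin m → ℂ),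
      (linDim K (Set.range x) : ℤ) + trdeg (Set.range fun i => Complex.exp (x i))
        - linDim ℚ (Set.range x) ≥ -(trdeg (K : Set ℂ) : ℤ))
    (n : ℕ) (v : Fin n → ℂˣ) (hv : ∀ i, v i ∈ greenGroup ε Q)
    (hi : LinearIndependent ℤ (fun i => Additive.ofMul (v i))) :
    n ≤ 2 * trdeg (Set.range fun i => (v i : ℂ)) + 4 * l + trdeg (K : Set ℂ) := by
  choose t q hq hvx using hv
  subst hε
  obtain ⟨b, hb⟩ : ∃ b : Fin l → ℝ, Submodule.span ℚ (Set.range b) =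
      Submodule.span ℚ (Q : Set ℝ) := by
    have hfr : Module.finrank ℚ (Submodule.span ℚ (Q : Set ℝ)) = l :=
      Module.finrank_eq_of_rank_eq hl
    have hfin : Module.Finite ℚ (Submodule.span ℚ (Q : Set ℝ)) := by
      apply Module.rank_lt_aleph0_iff.mp
      rw [hl]; exact Cardinal.natCast_lt_aleph0
    let bb := Module.finBasisOfFinrankEq ℚ _ hfr
    refine ⟨fun i => (bb i : ℝ), ?_⟩
    have h1 := congrArg (Submodule.map (Submodule.span ℚ (Q : Set ℝ)).subtype) bb.span_eq
    rw [Submodule.map_span, Submodule.map_top, Submodule.range_subtype, ← Set.range_comp] at h1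
    exact h1
  have hq' : ∀ i, q i ∈ Submodule.span ℚ (Set.range b) := by
    intro i; rw [hb]; exact Submodule.subset_span (hq i)
  have hxi : LinearIndependent ℚ (fun i => (1 + β * I) * (t i : ℂ) + q i) := by
    apply aux_x_indep
    simpa [hvx] using hi
  let x1 : Fin n → ℂ := fun i => (1 + β * I) * (t i : ℂ) + q i
  let x2 : Fin n → ℂ := fun i => (1 - β * I) * (t i : ℂ) + q i
  have hconj : ∀ i, x2 i = starRingEnd ℂ (x1 i) := by
    intro i; simp [x1, x2, sub_eq_add_neg]
  let x : Fin (n + n) → ℂ := Fin.append x1 x2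
  have hmem1 : ∀ i, x1 i ∈ Set.range x := fun i => ⟨Fin.castAdd n i, by simp [x]⟩
  have hmem2 : ∀ i, x2 i ∈ Set.range x := fun i => ⟨Fin.natAdd n i, Fin.append_right x1 x2 i⟩
  have hcases : ∀ z ∈ Set.range x, ∃ i, z = x1 i ∨ z = x2 i := by
    rintro _ ⟨j, rfl⟩
    refine Fin.addCases (fun i => ⟨i, Or.inl (by simp [x])⟩) (fun i => ⟨i, Or.inr (Fin.append_right x1 x2 i)⟩) j
  have hβK : (β : ℂ) * I ∈ K := by
    rw [hK]; exact IntermediateField.subset_adjoin _ _ rfl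
  have d1 := aux_dimK K β hβK t q b hq' (Set.range x) hcases
  have d2 := aux_dimQ β hβ t q b hq' hxi (Set.range x) (Set.finite_range x) hmem1 hmem2
  have d3 := hSC _ x
  have hv1 : ∀ i, Complex.exp (x1 i) = (v i : ℂ) := fun i => by rw [hvx]; rfl
  have hfin := Set.finite_range fun i => (v i : ℂ)
  have d4 : trdeg (Set.range fun i => Complex.exp (x i)) ≤
      2 * trdeg (Set.range fun i => (v i : ℂ)) := by
    have e1 : (Set.range fun i => Complex.exp (x i)) ⊆ (Set.range fun i => (v i : ℂ)) ∪
        starRingEnd ℂ '' (Set.range fun i => (v i : ℂ)) := by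
      rintro _ ⟨j, rfl⟩
      obtain ⟨i, h | h⟩ := hcases (x j) ⟨j, rfl⟩
      · left; exact ⟨i, by simp only [h, hv1]⟩
      · right; exact ⟨_, ⟨i, rfl⟩, by simp only [h, hconj, Complex.exp_conj, hv1]⟩
    have e2 := aux_trdeg_mono_cl (Set.finite_range _) (hfin.union (hfin.image _))
      (e1.trans ((AlgebraicIndependent.matroid ℚ ℂ).subset_closure _ (by simp)))
    have e3 := aux_trdeg_union hfin (hfin.image (starRingEnd ℂ))
    have e4 := aux_trdeg_conj_le hfin
    omega
  omega

/-- assuming SC_K for `K = ℚ(βi)`, every finite tuple `c` of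
nonzero complex numbers extends to a finite tuple `c'` which is strong for the
localised predimension: for all tuples `y`,
`2·trdeg(y/ℚ(c')) − (r(y,c') − r(c')) ≥ 0`; moreover if `c ⊆ G` then `c'` can
be chosen inside `G`. -/
theorem statement10 (β : ℝ) (hβ : β ≠ 0) (ε : ℂ) (hε : ε = 1 + β * I)
    (K : IntermediateField ℚ ℂ) (hK : K = IntermediateField.adjoin ℚ {(β : ℂ) * I})
    (Q : AddSubgroup ℝ) (hQnt : Q ≠ ⊥)
    (hQdiv : ∀ q ∈ Q, ∀ m : ℕ, 0 < m → ∃ r ∈ Q, m • r = q)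
    (l : ℕ) (hl : Module.rank ℚ (Submodule.span ℚ (Q : Set ℝ)) = l)
    (hSC : ∀ (m : ℕ) (x : Fin m → ℂ),
      (linDim K (Set.range x) : ℤ) + trdeg (Set.range fun i => Complex.exp (x i))
        - linDim ℚ (Set.range x) ≥ -(trdeg (K : Set ℂ) : ℤ)) :
    ∀ (p : ℕ) (c : Fin p → ℂˣ), ∃ (p' : ℕ) (c' : Fin p' → ℂˣ),
      Set.range c ⊆ Set.range c'
      ∧ (∀ (n : ℕ) (y : Fin n → ℂˣ),
          2 * (trdegOver (Set.range fun i => (c' i : ℂ))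
                (Set.range fun i => (y i : ℂ)) : ℤ)
              - ((qRank (divHull (Set.range y ∪ Set.range c') ⊓ greenGroup ε Q) : ℤ)
                  - (qRank (divHull (Set.range c') ⊓ greenGroup ε Q) : ℤ))
            ≥ 0)
      ∧ ((∀ i, c i ∈ greenGroup ε Q) → ∀ i, c' i ∈ greenGroup ε Q) := by
  intro p c
  set G := greenGroup ε Q with hG
  let co : Set ℂˣ → Set ℂ := fun S => (fun u : ℂˣ => (u : ℂ)) '' S
  let C : ℕ := 4 * l + trdeg (K : Set ℂ)
  have hbd : ∀ S : Set ℂˣ, S.Finite → qRank (divHull S ⊓ G) ≤ 2 * trdeg (co S) + C := by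
    intro S hS
    obtain ⟨v, hv, hi⟩ := aux_exists_indep (divHull S ⊓ G)
    have h1 := aux_bound β hβ ε hε K hK Q l hl hSC _ v (fun i => (hv i).2) hi
    have h2 : trdeg (Set.range fun i => (v i : ℂ)) ≤ trdeg (co S) := by
      apply aux_trdeg_mono_cl (Set.finite_range _) (hS.image _)
      rintro _ ⟨i, rfl⟩
      exact aux_divHull_closure S (v i) (hv i).1
    omega
  have hex : ∃ k : ℕ, ∃ S : Set ℂˣ, S.Finite ∧ S ⊆ G ∧
      2 * trdeg (co (Set.range c ∪ S)) + C = qRank (divHull (Set.range c ∪ S) ⊓ G) + k := by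
    refine ⟨_, ∅, Set.finite_empty, Set.empty_subset _,
      (Nat.add_sub_cancel' (hbd _ ((Set.finite_range c).union Set.finite_empty))).symm⟩
  classical
  obtain ⟨S, hSf, hSG, hSk⟩ := Nat.find_spec hex
  have hmin := fun m => Nat.find_min' hex (m := m)
  set k := Nat.find hex with hk
  set A := Set.range c ∪ S with hA
  have hAf : A.Finite := (Set.finite_range c).union hSf
  obtain ⟨p', c', -, hc'⟩ := hAf.fin_param
  refine ⟨p', c', by rw [hc']; exact Set.subset_union_left, ?_, ?_⟩
  · intro n y
    have r1 : (Set.range fun i => (c' i : ℂ)) = co A := by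
      rw [← hc']; exact Set.range_comp (fun u : ℂˣ => (u : ℂ)) c'
    have r2 : (Set.range fun i => (y i : ℂ)) = co (Set.range y) :=
      Set.range_comp (fun u : ℂˣ => (u : ℂ)) y
    rw [r1, r2, hc']
    have hyf := Set.finite_range y
    obtain ⟨v, hv, hi⟩ := aux_exists_indep (divHull (Set.range y ∪ A) ⊓ G)
    have hvf := Set.finite_range v
    have hE : Set.range c ∪ (S ∪ Set.range v) = A ∪ Set.range v := (Set.union_assoc _ _ _).symm
    have hEf : (A ∪ Set.range v).Finite := hAf.union hvf
    have q1 : qRank (divHull (Set.range y ∪ A) ⊓ G) ≤ qRank (divHull (A ∪ Set.range v) ⊓ G) := by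
      refine aux_le_qRank hEf _ inf_le_left v (fun i => ⟨?_, (hv i).2⟩) hi
      exact ⟨1, le_rfl, by rw [pow_one]; exact Subgroup.subset_closure (Or.inr ⟨i, rfl⟩)⟩
    have q2 : k ≤ 2 * trdeg (co (A ∪ Set.range v)) + C - qRank (divHull (A ∪ Set.range v) ⊓ G) := by
      apply hmin
      refine ⟨S ∪ Set.range v, hSf.union hvf, ?_, ?_⟩
      · rintro u (hu | ⟨i, rfl⟩)
        · exact hSG hu
        · exact (hv i).2
      · rw [hE]
        exact (Nat.add_sub_cancel' (hbd _ hEf)).symm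
    have q3 := hbd _ hEf
    have q4 : trdeg (co (A ∪ Set.range v)) ≤ trdeg (co A ∪ co (Set.range y)) := by
      apply aux_trdeg_mono_cl (hEf.image _) ((hAf.image _).union (hyf.image _))
      have hu : co A ∪ co (Set.range y) = co (Set.range y ∪ A) := by
        rw [Set.union_comm]; exact (Set.image_union _ _ _).symm
      rw [hu]
      rintro _ ⟨u, hu | ⟨i, rfl⟩, rfl⟩
      · exact (AlgebraicIndependent.matroid ℚ ℂ).subset_closure _ (by simp) ⟨u, Or.inr hu, rfl⟩
      · exact aux_divHull_closure _ _ (hv i).1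
    have q5 := aux_trdegOver (co A) (co (Set.range y)) (hAf.image _) (hyf.image _)
    omega
  · intro hc i
    have : c' i ∈ A := hc' ▸ ⟨i, rfl⟩
    rcases this with ⟨j, hj⟩ | h
    · rw [← hj]; exact hc j
    · exact hSG h
end

section
/- Assume the Schanuel Conjecture: for every n and every ℚ-linearly independent tuple x ∈ ℂ^n, trdeg(x, exp(x)) ≥ n. Let B be a finite subset of ℂ which is strong with respect to δ_exp, i.e. for every finite tuple x of complex numbers, δ_exp(x/B) ≥ 0. Then the set of all x₀ ∈ ℂ such that either x₀ lies in the ℚ-linear span of B, or there exists a finite tuple x of complex numbers containing x₀, ℚ-linearly independent over the ℚ-linear span of B, with δ_exp(x/B) = 0, is countable. -/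
open Complex

noncomputable section

/-- `δ_exp(x/B) = trdeg(x, exp x / B ∪ exp B) − lin.d._ℚ(x/B)`, as an integer. -/
def deltaExp (B : Set ℂ) {n : ℕ} (x : Fin n → ℂ) : ℤ :=
  (trdegOver (B ∪ Complex.exp '' B)
      (Set.range x ∪ Set.range fun i => Complex.exp (x i)) : ℤ)
    - linDimOver ℚ B (Set.range x)

end

lemma formallySmooth_field (K L : Type*) [Field K] [Field L] [Algebra K L] [CharZero K] :
    Algebra.FormallySmooth K L := by
  obtain ⟨s, hs⟩ := exists_isTranscendenceBasis K L
  have h := hs.isAlgebraic_field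
  exact .of_algebraicIndependent_of_isSeparable hs.1

lemma formallySmooth_dom (A L : Type*) [CommRing A] [IsDomain A] [Field L] [Algebra A L]
    [FaithfulSMul A L] [CharZero L] : Algebra.FormallySmooth A L := by
  let : Algebra (FractionRing A) L := FractionRing.liftAlgebra A L
  have : CharZero (FractionRing A) := (algebraMap (FractionRing A) L).charZero_iff (algebraMap (FractionRing A) L).injective |>.mpr inferInstance
  have := formallySmooth_field (FractionRing A) L
  have : Algebra.FormallySmooth A (FractionRing A) := .of_isLocalization (nonZeroDivisors _)
  exact .comp _ (FractionRing A) _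

lemma exists_derivation_ext {A L : Type*} [CommRing A] [IsDomain A] [Field L] [Algebra A L]
    [FaithfulSMul A L] [CharZero L] (f : A →+* TrivSqZeroExt L L)
    (hf : ∀ a, (f a).fst = algebraMap A L a) :
    ∃ D : Derivation ℤ L L, ∀ a, D (algebraMap A L a) = (f a).snd := by
  have := formallySmooth_dom A L
  let : Algebra A (TrivSqZeroExt L L) := f.toAlgebra
  let g : TrivSqZeroExt L L →ₐ[A] L :=
    { (TrivSqZeroExt.fstHom ℤ L L).toRingHom with commutes' := fun a => hf a }
  have hgs : ∀ x, g x = x.fst := fun x => rfl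
  have hg : Function.Surjective g := fun x => ⟨TrivSqZeroExt.inl x, rfl⟩
  have hk : IsNilpotent (RingHom.ker (g : TrivSqZeroExt L L →+* L)) := by
    refine ⟨2, ?_⟩
    refine (pow_two (RingHom.ker (g : TrivSqZeroExt L L →+* L))).trans ?_
    rw [Ideal.zero_eq_bot, eq_bot_iff, Ideal.mul_le]
    intro r hr s hs
    have hr' : r.fst = 0 := hr
    have hs' : s.fst = 0 := hs
    rw [Ideal.mem_bot]
    ext <;> simp [hr', hs']
  let φ := Algebra.FormallySmooth.liftOfSurjective (AlgHom.id A L) g hg hk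
  have hφ : ∀ x, (φ x).fst = x := fun x =>
    Algebra.FormallySmooth.liftOfSurjective_apply (AlgHom.id A L) g hg hk x
  refine ⟨Derivation.mk' ((TrivSqZeroExt.sndHom L L).toAddMonoidHom.comp φ.toRingHom.toAddMonoidHom).toIntLinearMap ?_, ?_⟩
  · intro a b
    have : (φ (a*b)).snd = a * (φ b).snd + b * (φ a).snd := by
      rw [map_mul, TrivSqZeroExt.snd_mul, hφ, hφ]; simp [mul_comm]
    exact this
  · intro a
    have : φ (algebraMap A L a) = f a := φ.commutes a
    show (φ (algebraMap A L a)).snd = _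
    rw [this]

/-- The field of constants of a derivation. -/
def constF {L : Type*} [Field L] (D : Derivation ℤ L L) : Subfield L where
  carrier := {a | D a = 0}
  mul_mem' := by intro a b ha hb; simp only [Set.mem_ofPred_eq] at *; simp [ha, hb]
  one_mem' := by simp
  add_mem' := by intro a b ha hb; simp only [Set.mem_ofPred_eq] at *; simp [ha, hb]
  zero_mem' := by simp
  neg_mem' := by intro a ha; simp only [Set.mem_ofPred_eq] at *; simp [ha]
  inv_mem' := by intro a ha; simp only [Set.mem_ofPred_eq] at *; simp [Derivation.leibniz_inv, ha]

lemma mem_constF {L : Type*} [Field L] (D : Derivation ℤ L L) (a : L) :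
    a ∈ constF D ↔ D a = 0 := Iff.rfl

/-- Extension of scalars of a derivation which kills the scalars. -/
def Derivation.upgrade {L : Type*} [Field L] (D : Derivation ℤ L L) (R : Type*) [CommRing R]
    [Algebra R L] (h : ∀ r, D (algebraMap R L r) = 0) : Derivation R L L :=
  Derivation.mk'
    { toFun := D
      map_add' := map_add D
      map_smul' := by intro r x; simp [Algebra.smul_def, h] }
    (by intro a b; simp)

@[simp] lemma Derivation.upgrade_apply {L : Type*} [Field L] (D : Derivation ℤ L L) (R : Type*) [CommRing R]
    [Algebra R L] (h : ∀ r, D (algebraMap R L r) = 0) (x : L) : D.upgrade R h x = D x := rfl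

lemma constF_alg {L : Type*} [Field L] [CharZero L] (D : Derivation ℤ L L) {a : L}
    (ha : IsAlgebraic (constF D) a) : D a = 0 := by
  let D' := D.upgrade (constF D) (fun r => r.2)
  have h0 : D' (Polynomial.aeval a (minpoly (constF D) a)) = 0 := by simp
  have hs : (minpoly (constF D) a).Separable := (minpoly.irreducible ha.isIntegral).separable
  rw [Derivation.map_aeval] at h0
  have := hs.aeval_derivative_ne_zero (minpoly.aeval _ a)
  have h1 : D' a = 0 := by simpa [this] using h0
  exact h1

lemma constF_alg' {L : Type*} [Field L] [CharZero L] (D : Derivation ℤ L L) {R : Type*} [CommRing R]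
    [Algebra R L] [FaithfulSMul R L] (h : ∀ r, D (algebraMap R L r) = 0) {a : L}
    (ha : IsAlgebraic R a) : D a = 0 := by
  apply constF_alg
  let φ : R →+* constF D := (algebraMap R L).codRestrict (constF D) h
  have hφ : Function.Injective φ := by
    intro x y hxy
    exact FaithfulSMul.algebraMap_injective R L (congrArg Subtype.val hxy)
  obtain ⟨p, hp, hpa⟩ := ha
  refine ⟨p.map φ, (Polynomial.map_ne_zero_iff hφ).mpr hp, ?_⟩
  rw [Polynomial.aeval_def, Polynomial.eval₂_map]
  exact hpa

section residue
open Polynomial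

variable {M L : Type*} [Field M] [Field L] [Algebra M L] {t : L}

lemma aeval_ne (ht : Transcendental M t) {q : M[X]} (hq : q ≠ 0) : aeval t q ≠ 0 :=
  fun h => ht ⟨q, hq, h⟩

lemma ne_of_coeff {q : M[X]} (hq : q.coeff 0 ≠ 0) : q ≠ 0 := by
  rintro rfl; simp at hq

/-- The local ring at `t = 0`. -/
def locO (ht : Transcendental M t) : Subalgebra M L where
  carrier := {x | ∃ p q : M[X], q.coeff 0 ≠ 0 ∧ x = aeval t p / aeval t q}
  mul_mem' := by
    rintro _ _ ⟨p, q, hq, rfl⟩ ⟨p', q', hq', rfl⟩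
    exact ⟨p * p', q * q', by simp [mul_coeff_zero, hq, hq'], by simp [div_mul_div_comm]⟩
  add_mem' := by
    rintro _ _ ⟨p, q, hq, rfl⟩ ⟨p', q', hq', rfl⟩
    have h1 := aeval_ne ht (ne_of_coeff hq)
    have h2 := aeval_ne ht (ne_of_coeff hq')
    exact ⟨p * q' + q * p', q * q', by simp [mul_coeff_zero, hq, hq'], by simp [div_add_div _ _ h1 h2]⟩
  algebraMap_mem' := fun r => ⟨C r, 1, by simp, by simp⟩

lemma locO_E (ht : Transcendental M t) (E : Derivation M L L) (hE : E t = 1) {x : L}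
    (hx : x ∈ locO ht) : E x ∈ locO ht := by
  obtain ⟨p, q, hq, rfl⟩ := hx
  have h1 := aeval_ne ht (ne_of_coeff hq)
  refine ⟨q * derivative p - p * derivative q, q ^ 2, by simpa [pow_two, mul_coeff_zero] using hq, ?_⟩
  rw [Derivation.leibniz_div, Derivation.map_aeval, Derivation.map_aeval, hE]
  simp
  field_simp

lemma locO_unit (ht : Transcendental M t) {p q : M[X]} (hq : q.coeff 0 ≠ 0) :
    aeval t p / aeval t q ∈ locO ht := ⟨p, q, hq, rfl⟩

lemma locO_t (ht : Transcendental M t) : t ∈ locO ht := ⟨X, 1, by simp, by simp⟩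

lemma poly_decomp {p : M[X]} (hp : p ≠ 0) : ∃ (n : ℕ) (r : M[X]), r.coeff 0 ≠ 0 ∧ p = X ^ n * r := by
  obtain ⟨r, hr, hd⟩ := Polynomial.exists_eq_pow_rootMultiplicity_mul_and_not_dvd p hp 0
  refine ⟨_, r, ?_, by simpa using hr⟩
  simpa [X_dvd_iff] using hd

lemma rat_decomp (ht : Transcendental M t) {x : L} (hx : x ∈ IntermediateField.adjoin M {t}) (h0 : x ≠ 0) :
    ∃ (m : ℤ) (p q : M[X]), p.coeff 0 ≠ 0 ∧ q.coeff 0 ≠ 0 ∧ x = t ^ m * (aeval t p / aeval t q) := by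
  rw [IntermediateField.mem_adjoin_simple_iff] at hx
  obtain ⟨r, s, rfl⟩ := hx
  have hr : r ≠ 0 := by rintro rfl; simp at h0
  have hs : s ≠ 0 := by rintro rfl; simp at h0
  obtain ⟨n, p, hp, rfl⟩ := poly_decomp hr
  obtain ⟨n', q, hq, rfl⟩ := poly_decomp hs
  have ht0 : t ≠ 0 := by rintro rfl; exact ht isAlgebraic_zero
  refine ⟨n - n', p, q, hp, hq, ?_⟩
  rw [zpow_sub₀ ht0]
  simp [mul_div_mul_comm]

lemma log_decomp (ht : Transcendental M t) (E : Derivation M L L) (hE : E t = 1)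
    {x : L} (hx : x ∈ IntermediateField.adjoin M {t}) (h0 : x ≠ 0) :
    ∃ m : ℤ, ∃ o ∈ locO ht, E x / x = m / t + o := by
  obtain ⟨m, p, q, hp, hq, rfl⟩ := rat_decomp ht hx h0
  have ht0 : t ≠ 0 := by rintro rfl; exact ht isAlgebraic_zero
  have h1 := aeval_ne ht (ne_of_coeff hp)
  have h2 := aeval_ne ht (ne_of_coeff hq)
  refine ⟨m, E (aeval t p / aeval t q) * (aeval t q / aeval t p),
    mul_mem (locO_E ht E hE (locO_unit ht hq)) (locO_unit ht hp), ?_⟩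
  set g := aeval t p / aeval t q with hg
  have hg0 : g ≠ 0 := div_ne_zero h1 h2
  have hgi : aeval t q / aeval t p = g⁻¹ := by rw [hg, inv_div]
  rw [hgi, Derivation.leibniz, Derivation.leibniz_zpow, hE, zpow_sub_one₀ ht0]
  have := zpow_ne_zero m ht0
  simp
  field_simp
  ring

lemma residue_zero [CharZero L] (ht : Transcendental M t) (E : Derivation M L L) (hE : E t = 1)
    {U : L} (hU : U ∈ IntermediateField.adjoin M {t}) (β : M) {o : L} (ho : o ∈ locO ht)
    (h : E U = algebraMap M L β / t + o) : β = 0 := by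
  have ht0 : t ≠ 0 := by rintro rfl; exact ht isAlgebraic_zero
  -- an element `p/q` which is `t` times an element of `O` has `p(0) = 0`
  have key : ∀ p q : M[X], q.coeff 0 ≠ 0 → ∀ o ∈ locO ht, aeval t p / aeval t q = t * o → p.coeff 0 = 0 := by
    rintro p q hq _ ⟨p', q', hq', rfl⟩ h
    have h1 := aeval_ne ht (ne_of_coeff hq)
    have h2 := aeval_ne ht (ne_of_coeff hq')
    have h3 : aeval t (p * q') = aeval t (X * p' * q) := by
      simp
      field_simp at h
      linear_combination h
    have h4 := transcendental_iff_injective.mp ht h3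
    have := congrArg (fun r => coeff r 0) h4
    simpa [mul_coeff_zero, hq'] using this
  have key' : ∀ o ∈ locO ht, algebraMap M L β = t * o → β = 0 := by
    intro o ho h
    simpa using key (C β) 1 (by simp) o ho (by simpa using h)
  by_cases hU0 : U = 0
  · subst hU0
    refine key' (-o) (neg_mem ho) ?_
    simp at h
    field_simp at h
    linear_combination -h
  obtain ⟨m, p, q, hp, hq, rfl⟩ := rat_decomp ht hU hU0
  have h1 := aeval_ne ht (ne_of_coeff hp)
  have h2 := aeval_ne ht (ne_of_coeff hq)
  rcases le_or_gt 0 m with hm | hm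
  · obtain ⟨m, rfl⟩ := Int.eq_ofNat_of_zero_le hm
    have hO : E (t ^ (m : ℤ) * (aeval t p / aeval t q)) ∈ locO ht := by
      apply locO_E ht E hE
      rw [zpow_natCast]
      exact mul_mem (pow_mem (locO_t ht) _) (locO_unit ht hq)
    refine key' _ (sub_mem hO ho) ?_
    rw [h]; field_simp; ring
  · exfalso
    obtain ⟨k, hk⟩ := Int.eq_ofNat_of_zero_le (show 0 ≤ -m - 1 by omega)
    obtain rfl : m = -((k + 1 : ℕ) : ℤ) := by push_cast; omega
    set g := aeval t p / aeval t q with hg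
    have hgO : g ∈ locO ht := locO_unit ht hq
    have hE' : E (t ^ (-((k + 1 : ℕ) : ℤ)) * g) = t ^ (-((k + 1 : ℕ) : ℤ)) * E g - ((k+1 : ℕ) : L) * t ^ (-((k + 1 : ℕ) : ℤ)) / t * g := by
      rw [Derivation.leibniz, Derivation.leibniz_zpow, hE, zpow_sub_one₀ ht0]
      simp
      field_simp
      ring
    rw [hE', zpow_neg, zpow_natCast] at h
    have h5 := key (C ((k+1 : ℕ) : M) * p) q hq
      (E g - algebraMap M L β * t ^ k - o * t ^ (k+1)) (by
        refine sub_mem (sub_mem (locO_E ht E hE hgO) (mul_mem (algebraMap_mem _ _) (pow_mem (locO_t ht) _))) (mul_mem ho (pow_mem (locO_t ht) _))) (by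
        rw [map_mul, mul_div_assoc, ← hg]
        simp only [map_natCast]
        have htk := pow_ne_zero k ht0
        rw [pow_succ] at *
        field_simp at h
        linear_combination -h)
    have : CharZero M := (algebraMap M L).charZero_iff (algebraMap M L).injective |>.mpr inferInstance
    simp [hp] at h5
    exact absurd h5 (by exact_mod_cast Nat.succ_ne_zero k)

end residue

lemma exists_ddt {M L : Type*} [Field M] [Field L] [Algebra M L] [CharZero L] {t : L}
    (ht : Transcendental M t) : ∃ E : Derivation M L L, E t = 1 := by
  let : Algebra (Polynomial M) L := (Polynomial.aeval (R := M) t).toAlgebra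
  have hal : ∀ p : Polynomial M, algebraMap (Polynomial M) L p = Polynomial.aeval t p := fun _ => rfl
  have : FaithfulSMul (Polynomial M) L := by
    rw [faithfulSMul_iff_algebraMap_injective]
    exact transcendental_iff_injective.mp ht
  let f : Polynomial M →+* TrivSqZeroExt L L :=
    Polynomial.eval₂RingHom ((TrivSqZeroExt.inlHom L L).comp (algebraMap M L))
      (TrivSqZeroExt.inl t + TrivSqZeroExt.inr 1)
  have hf : ∀ a, (f a).fst = algebraMap (Polynomial M) L a := by
    intro a
    have : ((TrivSqZeroExt.fstHom L L L).toRingHom.comp f) = (Polynomial.aeval (R := M) t).toRingHom := by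
      apply Polynomial.ringHom_ext <;> simp [f]
    exact congrArg (fun g : Polynomial M →+* L => g a) this
  obtain ⟨D, hD⟩ := exists_derivation_ext f hf
  refine ⟨D.upgrade M ?_, ?_⟩
  · intro r
    have := hD (Polynomial.C r)
    simpa [hal, f] using this
  · have := hD Polynomial.X
    simpa [hal, f] using this

lemma derivation_comm {M L : Type*} [Field M] [Field L] [Algebra M L] [CharZero L] {t : L}
    (E : Derivation M L L) (hE : E t = 1)
    [Algebra.IsAlgebraic (IntermediateField.adjoin M {t}) L]
    (σ : L ≃ₐ[IntermediateField.adjoin M {t}] L) (x : L) : E (σ x) = σ (E x) := by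
  let D : Derivation ℤ L L := Derivation.mk'
    { toFun := fun x => σ.symm (E (σ x)) - E x
      map_add' := by intro x y; simp; ring
      map_smul' := by intro n x; simp; ring }
    (by intro a b; simp; ring)
  have hDa : ∀ x, D x = σ.symm (E (σ x)) - E x := fun _ => rfl
  have hM : ∀ r : M, σ (algebraMap M L r) = algebraMap M L r := fun r =>
    σ.commutes (algebraMap M (IntermediateField.adjoin M {t}) r)
  have hk : ∀ r : IntermediateField.adjoin M {t}, D (algebraMap _ L r) = 0 := by
    rintro ⟨r, hr⟩
    change D r = 0
    induction hr using IntermediateField.adjoin_induction with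
    | mem x hx =>
      obtain rfl : x = t := hx
      have : σ x = x := σ.commutes ⟨x, IntermediateField.mem_adjoin_simple_self M x⟩
      rw [hDa, this, hE]; simp
    | algebraMap x => rw [hDa, hM]; simp
    | add x y _ _ hx hy => simp [hx, hy]
    | inv x _ hx => simp [Derivation.leibniz_inv, hx]
    | mul x y _ _ hx hy => simp [hx, hy]
  have h := constF_alg' D hk (Algebra.IsAlgebraic.isAlgebraic (R := IntermediateField.adjoin M {t}) x)
  rw [hDa, sub_eq_zero, AlgEquiv.symm_apply_eq] at h
  exact h

lemma logDer_prod {M L ι : Type*} [Field M] [Field L] [Algebra M L] (E : Derivation M L L)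
    (s : Finset ι) (f : ι → L) (hf : ∀ i ∈ s, f i ≠ 0) :
    E (∏ i ∈ s, f i) / ∏ i ∈ s, f i = ∑ i ∈ s, E (f i) / f i := by
  classical
  induction s using Finset.induction_on with
  | empty => simp
  | insert a s ha ih =>
    have h1 := hf a (by simp)
    have h2 : ∏ i ∈ s, f i ≠ 0 := Finset.prod_ne_zero_iff.mpr fun i hi => hf i (by simp [hi])
    rw [Finset.prod_insert ha, Finset.sum_insert ha, ← ih (fun i hi => hf i (by simp [hi])), Derivation.leibniz]
    simp
    field_simp
    ring

/-- key step, one variable -/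
lemma rosenlicht_one {M L ι : Type*} [Field M] [Field L] [Algebra M L] [CharZero L] [IsAlgClosed L]
    [Fintype ι] {t : L} (ht : Transcendental M t)
    [Algebra.IsAlgebraic (IntermediateField.adjoin M {t}) L]
    (b : ι → M) (hb : ∀ n : ι → ℤ, ∑ j, (n j : M) * b j = 0 → n = 0)
    (u : L) (w : ι → L) (hw : ∀ j, w j ≠ 0) (j₀ : ι) (hj : w j₀ = t)
    (h : ∀ E : Derivation M L L, E u = ∑ j, algebraMap M L (b j) * (E (w j) / w j)) : False := by
  classical
  obtain ⟨E, hE⟩ := exists_ddt ht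
  have ht0 : t ≠ 0 := by rintro rfl; exact ht isAlgebraic_zero
  set R := IntermediateField.adjoin M {t} with hR
  have : IsAlgClosure R L := ⟨inferInstance, inferInstance⟩
  have : CharZero R := (algebraMap R L).charZero_iff (algebraMap R L).injective |>.mpr inferInstance
  have : IsGalois R L := {}
  let F : FiniteGaloisIntermediateField R L := FiniteGaloisIntermediateField.adjoin R (insert u (Set.range w))
  have hFs : insert u (Set.range w) ⊆ (F.toIntermediateField : Set L) := FiniteGaloisIntermediateField.subset_adjoin R _
  let u' : F := ⟨u, hFs (by simp)⟩
  let w' : ι → F := fun j => ⟨w j, hFs (by simp)⟩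
  have hsurj := AlgEquiv.restrictNormalHom_surjective (F := R) (K₁ := F) L
  choose lift hlift using hsurj
  have hl : ∀ (τ : Gal(F/R)) (x : F), lift τ (x : L) = (τ x : F) := by
    intro τ x
    conv_rhs => rw [← hlift τ]
    exact (AlgEquiv.restrictNormal_commutes (lift τ) F x).symm
  have hsum : ∀ τ : Gal(F/R), E (lift τ u) = ∑ j, algebraMap M L (b j) * (E (lift τ (w j)) / lift τ (w j)) := by
    intro τ
    rw [derivation_comm E hE, h E, map_sum]
    refine Finset.sum_congr rfl fun j _ => ?_
    have : lift τ (algebraMap M L (b j)) = algebraMap M L (b j) := (lift τ).commutes (algebraMap M R (b j))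
    rw [map_mul, map_div₀, this, derivation_comm E hE]
  have htr : ∑ τ : Gal(F/R), lift τ u ∈ R := by
    have := trace_eq_sum_automorphisms (K := R) (L := F) u'
    have h2 := congrArg (algebraMap F L) this
    rw [map_sum] at h2
    have h3 : ∑ τ : Gal(F/R), lift τ u = algebraMap F L (algebraMap R F (Algebra.trace R F u')) := by
      rw [h2]; exact Finset.sum_congr rfl fun τ _ => hl τ u'
    rw [h3]
    exact (Algebra.trace R F u').2
  have hnm : ∀ j, ∏ τ : Gal(F/R), lift τ (w j) ∈ R := by
    intro j
    have := Algebra.norm_eq_prod_automorphisms R (w' j)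
    have h2 := congrArg (algebraMap F L) this
    rw [map_prod] at h2
    have h3 : ∏ τ : Gal(F/R), lift τ (w j) = algebraMap F L (algebraMap R F (Algebra.norm R (w' j))) := by
      rw [h2]; exact Finset.prod_congr rfl fun τ _ => hl τ (w' j)
    rw [h3]
    exact (Algebra.norm R (w' j)).2
  have hn0 : ∀ j, ∏ τ : Gal(F/R), lift τ (w j) ≠ 0 := by
    intro j
    rw [Finset.prod_ne_zero_iff]
    intro τ _
    simpa using hw j
  have hmain : E (∑ τ : Gal(F/R), lift τ u) =
      ∑ j, algebraMap M L (b j) * (E (∏ τ : Gal(F/R), lift τ (w j)) / ∏ τ : Gal(F/R), lift τ (w j)) := by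
    rw [map_sum, Finset.sum_congr rfl fun τ _ => hsum τ, Finset.sum_comm]
    refine Finset.sum_congr rfl fun j _ => ?_
    rw [logDer_prod E _ _ (fun τ _ => by simpa using hw j), Finset.mul_sum]
  have hdec : ∀ j, ∃ m : ℤ, ∃ o ∈ locO ht, E (∏ τ : Gal(F/R), lift τ (w j)) / (∏ τ : Gal(F/R), lift τ (w j)) = m / t + o
      ∧ (j = j₀ → m ≠ 0) := by
    intro j
    by_cases hjj : j = j₀
    · subst hjj
      have hc : ∏ τ : Gal(F/R), lift τ (w j) = t ^ (Fintype.card Gal(F/R)) := by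
        have hlt : ∀ τ, lift τ t = t := fun τ =>
          (lift τ).commutes (⟨t, IntermediateField.mem_adjoin_simple_self M t⟩ : R)
        rw [hj, Finset.prod_congr rfl fun τ _ => hlt τ]
        simp
      refine ⟨Fintype.card Gal(F/R), 0, zero_mem _, ?_, fun _ => by exact_mod_cast Fintype.card_ne_zero⟩
      rw [hc, Derivation.leibniz_pow, hE]
      have hd : Fintype.card Gal(F/R) ≠ 0 := Fintype.card_ne_zero
      obtain ⟨d, hd⟩ := Nat.exists_eq_succ_of_ne_zero hd
      rw [hd]
      have := pow_ne_zero d ht0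
      simp [pow_succ]
      field_simp
    · obtain ⟨m, o, ho, h⟩ := log_decomp ht E hE (hnm j) (hn0 j)
      exact ⟨m, o, ho, h, fun h => absurd h hjj⟩
  choose m o ho hmo hm using hdec
  have hβ : ∑ j, (m j : M) * b j = 0 := by
    refine residue_zero ht E hE htr _ (o := ∑ j, algebraMap M L (b j) * o j)
      (sum_mem fun j _ => mul_mem (algebraMap_mem _ _) (ho j)) ?_
    rw [hmain, map_sum, Finset.sum_div, ← Finset.sum_add_distrib]
    refine Finset.sum_congr rfl fun j _ => ?_
    rw [hmo]
    simp
    ring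
  exact hm j₀ rfl (congrFun (hb m hβ) j₀)

lemma isAlgebraic_mono {R S L : Type*} [CommRing R] [CommRing S] [Field L] [Algebra R L] [Algebra S L]
    [FaithfulSMul R L] [FaithfulSMul S L]
    (h : ∀ r : R, ∃ s : S, algebraMap S L s = algebraMap R L r) {a : L}
    (ha : IsAlgebraic R a) : IsAlgebraic S a := by
  have hS := FaithfulSMul.algebraMap_injective S L
  have hR := FaithfulSMul.algebraMap_injective R L
  choose f hf using h
  let φ : R →+* S :=
    { toFun := f
      map_one' := hS (by simp [hf])
      map_mul' := fun x y => hS (by simp [hf])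
      map_zero' := hS (by simp [hf])
      map_add' := fun x y => hS (by simp [hf]) }
  have hφ : ∀ r, algebraMap S L (φ r) = algebraMap R L r := hf
  have hφi : Function.Injective φ := by
    intro x y hxy
    exact hR (by rw [← hφ, ← hφ, hxy])
  obtain ⟨p, hp, hpa⟩ := ha
  refine ⟨p.map φ, (Polynomial.map_ne_zero_iff hφi).mpr hp, ?_⟩
  rw [Polynomial.aeval_def, Polynomial.eval₂_map]
  have : (algebraMap S L).comp φ = algebraMap R L := RingHom.ext hφ
  rw [this]
  exact hpa

lemma rosenlicht {K L ι : Type*} [Field K] [Field L] [Algebra K L] [CharZero L] [IsAlgClosed L]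
    [Fintype ι] (b : ι → K) (hb : ∀ n : ι → ℤ, ∑ j, (n j : K) * b j = 0 → n = 0)
    (u : L) (w : ι → L) (hw : ∀ j, w j ≠ 0)
    (h : ∀ E : Derivation K L L, E u = ∑ j, algebraMap K L (b j) * (E (w j) / w j)) (j : ι) :
    IsAlgebraic K (w j) := by
  by_contra htr
  generalize ht : w j = t at htr
  have hind : AlgebraicIndepOn K id {t} := by
    have := (algebraicIndependent_unique_type_iff (ι := ({t} : Set L)) (R := K) (x := fun i => (i : L))).mpr htr
    exact this
  obtain ⟨s, hts, hs⟩ := exists_isTranscendenceBasis_superset hind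
  have hts' : t ∈ s := hts rfl
  let M := IntermediateField.adjoin K (s \ {t})
  have htM : Transcendental M t := by
    have h1 : insert t (s \ {t}) = s := by simp [hts']
    have h2 : AlgebraicIndepOn K id (insert t (s \ {t})) := by rw [h1]; exact hs.1
    have h3 := ((AlgebraicIndepOn.insert_iff (by simp)).mp h2).2
    rw [Set.image_id] at h3
    intro hc
    apply h3
    open scoped IntermediateField.algebraAdjoinAdjoin in
    exact (IsFractionRing.isAlgebraic_iff (Algebra.adjoin K (s \ {t})) M L).mpr hc
  have halg : Algebra.IsAlgebraic (IntermediateField.adjoin M {t}) L := by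
    have h1 := hs.isAlgebraic_field
    refine ⟨fun a => isAlgebraic_mono ?_ (h1.isAlgebraic a)⟩
    rintro ⟨r, hr⟩
    have hle : IntermediateField.adjoin K (Set.range ((↑) : s → L)) ≤
        (IntermediateField.adjoin M {t}).restrictScalars K := by
      rw [IntermediateField.adjoin_le_iff]
      rintro _ ⟨⟨x, hx⟩, rfl⟩
      by_cases hxt : x = t
      · change x ∈ IntermediateField.adjoin M {t}
        rw [hxt]
        exact IntermediateField.mem_adjoin_simple_self M t
      · have : x ∈ M := IntermediateField.subset_adjoin K _ ⟨hx, hxt⟩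
        exact (IntermediateField.adjoin M {t}).algebraMap_mem (⟨x, this⟩ : M)
    exact ⟨⟨r, hle hr⟩, rfl⟩
  refine rosenlicht_one htM (fun j => algebraMap K M (b j)) ?_ u w hw j ht ?_
  · intro n hn
    apply hb
    apply (algebraMap K M).injective
    simpa using hn
  · intro E
    have := h (E.restrictScalars K)
    exact this

/-- The logarithmic derivative `D (exp a) / exp a`, as a ℚ-linear map. -/
noncomputable def lam {R : Type*} [CommRing R] [Algebra R ℂ] (D : Derivation R ℂ ℂ) : ℂ →ₗ[ℚ] ℂ :=
  AddMonoidHom.toRatLinearMap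
    { toFun := fun a => D (Complex.exp a) / Complex.exp a
      map_zero' := by simp
      map_add' := by
        intro a b
        have h1 := Complex.exp_ne_zero a
        have h2 := Complex.exp_ne_zero b
        simp [Complex.exp_add]
        field_simp
        ring }

lemma lam_apply {R : Type*} [CommRing R] [Algebra R ℂ] (D : Derivation R ℂ ℂ) (a : ℂ) :
    lam D a = D (Complex.exp a) / Complex.exp a := rfl

/-- A derivation as a ℚ-linear map. -/
noncomputable def derQ {R : Type*} [CommRing R] [Algebra R ℂ] (D : Derivation R ℂ ℂ) : ℂ →ₗ[ℚ] ℂ :=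
  AddMonoidHom.toRatLinearMap
    { toFun := D
      map_zero' := by simp
      map_add' := by simp }

lemma derQ_apply {R : Type*} [CommRing R] [Algebra R ℂ] (D : Derivation R ℂ ℂ) (a : ℂ) :
    derQ D a = D a := rfl

/-- A nonzero subspace stable under coordinatewise `D` contains a nonzero constant vector. -/
lemma exists_const_vec {ι : Type*} [Fintype ι] (D : Derivation ℤ ℂ ℂ) (W : Submodule ℂ (ι → ℂ))
    (hD : ∀ f ∈ W, (fun i => D (f i)) ∈ W) (hW : ∃ f ∈ W, f ≠ 0) :
    ∃ f ∈ W, f ≠ 0 ∧ ∀ i, D (f i) = 0 := by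
  classical
  let P : ℕ → Prop := fun m => ∃ f ∈ W, f ≠ 0 ∧ (Finset.univ.filter fun i => f i ≠ 0).card = m
  have hP : ∃ m, P m := by
    obtain ⟨f, hf, h0⟩ := hW
    exact ⟨_, f, hf, h0, rfl⟩
  obtain ⟨f, hf, h0, hcard⟩ := Nat.find_spec hP
  obtain ⟨i₀, hi₀⟩ := Function.ne_iff.mp h0
  simp only [Pi.zero_apply] at hi₀
  let g : ι → ℂ := (f i₀)⁻¹ • f
  have hg : g ∈ W := W.smul_mem _ hf
  have hgi : ∀ i, g i = (f i₀)⁻¹ * f i := fun i => rfl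
  refine ⟨g, hg, ?_, ?_⟩
  · intro h
    have := congrFun h i₀
    simp [hgi, hi₀] at this
  · by_contra! hne
    obtain ⟨i₁, hi₁⟩ := hne
    have hg1 : g i₀ = 1 := by rw [hgi]; exact inv_mul_cancel₀ hi₀
    have hlt : (Finset.univ.filter fun i => D (g i) ≠ 0).card < Nat.find hP := by
      rw [← hcard]
      apply Finset.card_lt_card
      rw [Finset.ssubset_iff_of_subset]
      · exact ⟨i₀, by simp [hi₀], by rw [Finset.mem_filter]; simp [hg1]⟩
      · intro i
        simp only [Finset.mem_filter, Finset.mem_univ, true_and]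
        intro h h'
        apply h
        simp [hgi, h']
    exact Nat.find_min hP hlt ⟨_, hD g hg, fun h => hi₁ (congrFun h i₁), rfl⟩

lemma ax_step {k : ℕ} (D : Derivation ℤ ℂ ℂ) (y : Fin k → ℂ)
    (hy : ∀ i, lam D (y i) = D (y i))
    (hind : ∀ q : Fin k → ℚ, D (∑ i, q i • y i) = 0 → q = 0)
    (T : Finset ℂ) (hT : T.card ≤ k)
    (hTE : ∀ E : Derivation (constF D) ℂ ℂ, (∀ x ∈ T, E x = 0) →
      ∀ i, E (y i) = 0 ∧ E (Complex.exp (y i)) = 0)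
    (hTD : ∃ x ∈ T, D x ≠ 0) : False := by
  classical
  let D' : Derivation (constF D) ℂ ℂ := D.upgrade (constF D) (fun r => r.2)
  have hD' : ∀ x, D' x = D x := fun _ => rfl
  let ω : Derivation (constF D) ℂ ℂ →ₗ[ℂ] (Fin k → ℂ) :=
    { toFun := fun E i => lam E (y i) - E (y i)
      map_add' := by intro E E'; ext i; simp [lam_apply]; ring
      map_smul' := by intro r E; ext i; simp [lam_apply]; ring }
  have hω : ∀ E i, ω E i = lam E (y i) - E (y i) := fun _ _ => rfl
  let τ : Derivation (constF D) ℂ ℂ →ₗ[ℂ] (T → ℂ) :=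
    { toFun := fun E x => E x
      map_add' := by intro E E'; ext i; simp
      map_smul' := by intro r E; ext i; simp }
  have hτ : ∀ E x, τ E x = E x := fun _ _ => rfl
  have hker : LinearMap.ker τ ≤ LinearMap.ker ω := by
    intro E hE
    have h1 : ∀ x ∈ T, E x = 0 := fun x hx => congrFun hE ⟨x, hx⟩
    have h2 := hTE E h1
    rw [LinearMap.mem_ker]
    ext i
    simp [hω, lam_apply, h2 i]
  have hωD : ω D' = 0 := by
    ext i
    have : lam D' (y i) = lam D (y i) := rfl
    simp [hω, this, hy, hD']
  have hτD : τ D' ≠ 0 := by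
    obtain ⟨x, hx, hne⟩ := hTD
    intro h
    exact hne (congrFun h ⟨x, hx⟩)
  obtain ⟨g, hg⟩ : ∃ g : (T → ℂ) →ₗ[ℂ] (Fin k → ℂ), g ∘ₗ τ = ω := by
    obtain ⟨g, hg⟩ := LinearMap.exists_extend
      (((LinearMap.ker τ).liftQ ω hker) ∘ₗ τ.quotKerEquivRange.symm.toLinearMap)
    refine ⟨g, LinearMap.ext fun E => ?_⟩
    have h1 := congrArg (fun h => h (⟨τ E, E, rfl⟩ : LinearMap.range τ)) hg
    have h2 : τ.quotKerEquivRange.symm ⟨τ E, E, rfl⟩ = Submodule.Quotient.mk E := by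
      rw [LinearEquiv.symm_apply_eq]
      rfl
    simp only [LinearMap.comp_apply, LinearEquiv.coe_coe, h2] at h1
    exact h1
  have hnt : LinearMap.range ω < ⊤ := by
    rw [lt_top_iff_ne_top]
    intro htop
    have hgs : Function.Surjective g := by
      rw [← hg] at htop
      have := LinearMap.range_comp_le_range τ g
      rw [htop, top_le_iff] at this
      exact LinearMap.range_eq_top.mp this
    have h1 := LinearMap.finrank_range_add_finrank_ker g
    rw [LinearMap.range_eq_top.mpr hgs, finrank_top] at h1
    simp at h1
    have h2 : Module.finrank ℂ (LinearMap.ker g) = 0 := by omega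
    rw [Submodule.finrank_eq_zero] at h2
    have h3 : τ D' ∈ LinearMap.ker g := by
      rw [LinearMap.mem_ker, ← LinearMap.comp_apply, hg, hωD]
    rw [h2] at h3
    exact hτD h3
  obtain ⟨φ, hφ, hle⟩ := Submodule.exists_le_ker_of_lt_top _ hnt
  let W : Submodule ℂ (Fin k → ℂ) :=
    { carrier := {f | ∀ E, ∑ i, f i * ω E i = 0}
      add_mem' := by
        intro a b ha hb E
        simp [add_mul, Finset.sum_add_distrib, ha E, hb E]
      zero_mem' := by intro E; simp
      smul_mem' := by
        intro r a ha E
        simp [mul_assoc, ← Finset.mul_sum, ha E] }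
  have hW : ∀ f, f ∈ W ↔ ∀ E, ∑ i, f i * ω E i = 0 := fun _ => Iff.rfl
  have hWne : ∃ f ∈ W, f ≠ 0 := by
    refine ⟨fun i => φ (Pi.single i 1), ?_, ?_⟩
    · intro E
      have h1 : φ (ω E) = 0 := hle ⟨E, rfl⟩
      rw [← h1]
      conv_rhs => rw [pi_eq_sum_univ' (ω E)]
      rw [map_sum]
      refine Finset.sum_congr rfl fun i _ => ?_
      rw [map_smul, smul_eq_mul, mul_comm]
    · intro h
      apply hφ
      apply LinearMap.pi_ext'
      intro i
      ext
      simpa using congrFun h i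
  have hbr : ∀ E i, ω ⁅D', E⁆ i = D (ω E i) := by
    intro E i
    have h1 := Complex.exp_ne_zero (y i)
    have h2 : D (Complex.exp (y i)) = D (y i) * Complex.exp (y i) := by
      have := hy i
      rw [lam_apply] at this
      field_simp at this
      linear_combination this
    simp only [hω, lam_apply, Derivation.commutator_apply, hD', map_sub, Derivation.leibniz_div, h2]
    simp
    field_simp
    ring
  have hWD : ∀ f ∈ W, (fun i => D (f i)) ∈ W := by
    intro f hf E
    have h1 := congrArg D (hf E)
    have h2 := hf ⁅D', E⁆
    simp only [hbr] at h2
    rw [map_sum, map_zero] at h1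
    simp only [Derivation.leibniz, smul_eq_mul, Finset.sum_add_distrib, h2, zero_add] at h1
    rw [← h1]
    exact Finset.sum_congr rfl fun i _ => mul_comm _ _
  obtain ⟨f, hfW, hf0, hfc⟩ := exists_const_vec D W hWD hWne
  let c : Fin k → constF D := fun i => ⟨f i, hfc i⟩
  let S := Submodule.span ℚ (Set.range c)
  have : Module.Finite ℚ S := Module.Finite.span_of_finite ℚ (Set.finite_range c)
  let b := Module.finBasis ℚ S
  let q : Fin k → Fin (Module.finrank ℚ S) → ℚ := fun i j => b.repr ⟨c i, Submodule.subset_span ⟨i, rfl⟩⟩ j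
  have hq : ∀ i, c i = ∑ j, q i j • (b j : constF D) := by
    intro i
    have := b.sum_repr ⟨c i, Submodule.subset_span ⟨i, rfl⟩⟩
    have := congrArg S.subtype this
    rw [map_sum] at this
    exact this.symm
  have hq' : ∀ i, f i = ∑ j, (q i j : ℂ) * ((b j : constF D) : ℂ) := by
    intro i
    have := congrArg (algebraMap (constF D) ℂ) (hq i)
    rw [map_sum] at this
    refine this.trans (Finset.sum_congr rfl fun j _ => ?_)
    rw [Algebra.smul_def, map_mul]
    simp
    left
    rfl
  have hros := rosenlicht (K := constF D) (L := ℂ) (fun j => (b j : constF D)) (by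
      intro n hn
      have hli : LinearIndependent ℚ (fun j => (b j : constF D)) :=
        b.linearIndependent.map' S.subtype (Submodule.ker_subtype S)
      rw [Fintype.linearIndependent_iff] at hli
      have := hli (fun j => (n j : ℚ)) (by rw [← hn]; simp [Algebra.smul_def])
      ext j
      exact_mod_cast this j)
    (∑ i, f i * y i) (fun j => Complex.exp (∑ i, q i j • y i)) (fun j => Complex.exp_ne_zero _) (by
      intro E
      have hEf : ∀ i, E (f i) = 0 := fun i => E.map_algebraMap (c i)
      have h1 := hfW E
      simp only [hω, mul_sub, Finset.sum_sub_distrib, sub_eq_zero] at h1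
      have h2 : E (∑ i, f i * y i) = ∑ i, f i * E (y i) := by
        rw [map_sum]
        exact Finset.sum_congr rfl fun i _ => by simp [hEf]
      rw [h2, ← h1]
      have h3 : ∀ j, E (Complex.exp (∑ i, q i j • y i)) / Complex.exp (∑ i, q i j • y i)
          = ∑ i, (q i j : ℂ) * lam E (y i) := by
        intro j
        rw [← lam_apply, map_sum]
        exact Finset.sum_congr rfl fun i _ => by rw [map_smul, Algebra.smul_def]; simp
      simp only [h3]
      simp_rw [Finset.mul_sum]
      rw [Finset.sum_comm]
      refine Finset.sum_congr rfl fun i _ => ?_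
      rw [hq' i, Finset.sum_mul]
      refine Finset.sum_congr rfl fun j _ => ?_
      have : algebraMap (constF D) ℂ (b j : constF D) = ((b j : constF D) : ℂ) := rfl
      rw [this]
      ring)
  have hq0 : ∀ j, (fun i => q i j) = 0 := by
    intro j
    apply hind
    have h1 : D (Complex.exp (∑ i, q i j • y i)) = 0 := constF_alg D (hros j)
    have h2 : lam D (∑ i, q i j • y i) = 0 := by rw [lam_apply, h1, zero_div]
    rw [map_sum] at h2
    rw [← derQ_apply, map_sum, ← h2]
    exact Finset.sum_congr rfl fun i _ => by rw [map_smul, map_smul, hy, derQ_apply]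
  apply hf0
  ext i
  rw [hq' i]
  simp only [Pi.zero_apply]
  refine Finset.sum_eq_zero fun j _ => ?_
  have := congrFun (hq0 j) i
  simp at this
  simp [this]

lemma eRk_eq_trdegOver (C S : Set ℂ) (hS : S.Finite) :
    (AlgebraicIndependent.matroid (IntermediateField.adjoin ℚ C) ℂ).eRk S = trdegOver C S := by
  classical
  set M := AlgebraicIndependent.matroid (IntermediateField.adjoin ℚ C) ℂ with hM
  set Z := {k : ℕ | ∃ t : Finset ℂ, ↑t ⊆ S ∧ t.card = k ∧
    AlgebraicIndependent (IntermediateField.adjoin ℚ C) (fun x : {y : ℂ // y ∈ t} => (x : ℂ))}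
    with hZ
  have hb : BddAbove Z := by
    refine ⟨S.ncard, ?_⟩
    rintro k ⟨t, ht, rfl, -⟩
    rw [← Set.ncard_coe_finset]
    exact Set.ncard_le_ncard ht hS
  have hne : Z.Nonempty := by
    obtain ⟨I, hI⟩ := M.exists_isBasis S (Set.subset_univ _)
    have hf : I.Finite := hS.subset hI.subset
    refine ⟨hf.toFinset.card, hf.toFinset, by simpa using hI.subset, rfl, ?_⟩
    have := AlgebraicIndependent.matroid_indep_iff.mp hI.indep
    have h2 : I = (hf.toFinset : Set ℂ) := by simp
    rw [h2] at this
    exact this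
  have hmem : sSup Z ∈ Z := Nat.sSup_mem hne hb
  apply le_antisymm
  · obtain ⟨I, hI⟩ := M.exists_isBasis S (Set.subset_univ _)
    have hf : I.Finite := hS.subset hI.subset
    have hk : hf.toFinset.card ∈ Z := by
      refine ⟨hf.toFinset, by simpa using hI.subset, rfl, ?_⟩
      have := AlgebraicIndependent.matroid_indep_iff.mp hI.indep
      have h2 : I = (hf.toFinset : Set ℂ) := by simp
      rw [h2] at this
      exact this
    rw [← hI.encard_eq_eRk, hf.encard_eq_coe_toFinset_card]
    exact_mod_cast le_csSup hb hk
  · obtain ⟨t, ht, hc, hi⟩ := hmem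
    have hti : M.Indep (t : Set ℂ) := AlgebraicIndependent.matroid_indep_iff.mpr hi
    have h1 := M.eRk_mono ht
    rw [hti.eRk_eq_encard, Set.encard_coe_eq_coe_finsetCard, hc] at h1
    exact h1

lemma linDimOver_eq (B : Set ℂ) {n : ℕ} (x : Fin n → ℂ)
    (h : LinearIndependent ℚ (fun i => (Submodule.span ℚ B).mkQ (x i))) :
    linDimOver ℚ B (Set.range x) = n := by
  rw [linDimOver, Submodule.map_span, ← Set.range_comp]
  have := finrank_span_eq_card h
  exact this.trans (Fintype.card_fin n)

lemma span_subset_closure (K : IntermediateField ℚ ℂ) (X : Set ℂ) (a : ℂ)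
    (ha : a ∈ Submodule.span ℚ X) :
    a ∈ (AlgebraicIndependent.matroid K ℂ).closure (X ∪ Complex.exp '' X) ∧
    Complex.exp a ∈ (AlgebraicIndependent.matroid K ℂ).closure (X ∪ Complex.exp '' X) := by
  rw [AlgebraicIndependent.matroid_closure_eq]
  set S := X ∪ Complex.exp '' X
  have hS : ∀ s ∈ S, IsAlgebraic (Algebra.adjoin K S) s := fun s hs =>
    isAlgebraic_algebraMap (⟨s, Algebra.subset_adjoin hs⟩ : Algebra.adjoin K S)
  simp only [SetLike.mem_coe, Subalgebra.mem_algebraicClosure]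
  induction ha using Submodule.span_induction with
  | mem x hx => exact ⟨hS _ (Or.inl hx), hS _ (Or.inr ⟨x, hx, rfl⟩)⟩
  | zero => simp [isAlgebraic_zero, isAlgebraic_one]
  | add x y _ _ hx hy =>
    refine ⟨hx.1.add hy.1, ?_⟩
    rw [Complex.exp_add]
    exact hx.2.mul hy.2
  | smul q x _ hx =>
    constructor
    · rw [Algebra.smul_def]
      refine IsAlgebraic.mul ?_ hx.1
      have : (algebraMap ℚ ℂ q) = algebraMap (Algebra.adjoin K S) ℂ (algebraMap K _ (algebraMap ℚ K q)) := rfl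
      rw [this]
      exact isAlgebraic_algebraMap _
    · apply IsAlgebraic.of_pow q.den_pos
      rw [← Complex.exp_nat_mul]
      have h1 : (q.den : ℂ) * (q • x) = (q.num : ℂ) * x := by
        rw [Rat.smul_def, ← mul_assoc]
        congr 1
        have := Rat.den_mul_eq_num q
        exact_mod_cast congrArg (fun r : ℚ => (r : ℂ)) this
      rw [h1, Complex.exp_int_mul]
      cases q.num with
      | ofNat m => simpa using hx.2.pow m
      | negSucc m => rw [zpow_negSucc]; exact (hx.2.pow _).inv

lemma kill_closure (K : IntermediateField ℚ ℂ) (E : Derivation ℤ ℂ ℂ) (hK : ∀ a ∈ K, E a = 0)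
    (t : Set ℂ) (ht : ∀ a ∈ t, E a = 0) (a : ℂ) (ha : IsAlgebraic (Algebra.adjoin K t) a) :
    E a = 0 := by
  refine constF_alg' E (R := Algebra.adjoin K t) ?_ ha
  rintro ⟨r, hr⟩
  change E r = 0
  induction hr using Algebra.adjoin_induction with
  | mem x hx => exact ht x hx
  | algebraMap r => exact hK _ r.2
  | add x y _ _ hx hy => rw [map_add, hx, hy, add_zero]
  | mul x y _ _ hx hy => rw [Derivation.leibniz, hx, hy]; simp

lemma nondeg (B : Set ℂ) (hstrong : ∀ (n : ℕ) (x : Fin n → ℂ), deltaExp B x ≥ 0)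
    {n : ℕ} (x : Fin n → ℂ) (hx : LinearIndependent ℚ (fun i => (Submodule.span ℚ B).mkQ (x i)))
    (hd : deltaExp B x = 0) (D : Derivation ℤ ℂ ℂ)
    (hDK : ∀ a ∈ IntermediateField.adjoin ℚ (B ∪ Complex.exp '' B), D a = 0)
    (hDx : ∀ i, D (Complex.exp (x i)) = Complex.exp (x i) * D (x i)) : ∀ i, D (x i) = 0 := by
  classical
  by_contra hcon
  set K := IntermediateField.adjoin ℚ (B ∪ Complex.exp '' B) with hKdef
  set M := AlgebraicIndependent.matroid K ℂ with hM
  set V := Submodule.span ℚ (Set.range x) with hV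
  have hxV : ∀ i, x i ∈ V := fun i => Submodule.subset_span ⟨i, rfl⟩
  have hxi : LinearIndependent ℚ x := LinearIndependent.of_comp (Submodule.span ℚ B).mkQ hx
  have : FiniteDimensional ℚ V := FiniteDimensional.span_of_finite ℚ (Set.finite_range x)
  have hVn : Module.finrank ℚ V = n := (finrank_span_eq_card hxi).trans (Fintype.card_fin n)
  have hinj : Function.Injective ((Submodule.span ℚ B).mkQ ∘ₗ V.subtype) := by
    rw [injective_iff_map_eq_zero]
    intro a ha
    have h1 := (Submodule.range_ker_disjoint (v := x) (f := (Submodule.span ℚ B).mkQ) hx).le_bot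
      ⟨a.2, LinearMap.mem_ker.mpr ha⟩
    exact Subtype.ext (by simpa using h1)
  -- lam = D on V
  have hlam : ∀ a ∈ V, lam D a = D a := by
    intro a ha
    have : V ≤ LinearMap.eqLocus (lam D) (derQ D) := by
      rw [hV, Submodule.span_le]
      rintro _ ⟨i, rfl⟩
      change lam D (x i) = D (x i)
      rw [lam_apply, hDx, mul_div_cancel_left₀ _ (Complex.exp_ne_zero _)]
    exact this ha
  have hexp0 : ∀ a ∈ V, D a = 0 → D (Complex.exp a) = 0 := by
    intro a ha h0
    have := hlam a ha
    rw [h0, lam_apply, div_eq_zero_iff] at this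
    exact this.resolve_right (Complex.exp_ne_zero _)
  set P : Submodule ℚ V := (LinearMap.ker (derQ D)).comap V.subtype with hP
  obtain ⟨Q, hPQ⟩ := Submodule.exists_isCompl P
  have hPQn : Module.finrank ℚ P + Module.finrank ℚ Q = n := by
    rw [Submodule.finrank_add_eq_of_isCompl hPQ, hVn]
  set c : Fin (Module.finrank ℚ P) → ℂ := fun i => ((Module.finBasis ℚ P i : V) : ℂ) with hc
  set y : Fin (Module.finrank ℚ Q) → ℂ := fun i => ((Module.finBasis ℚ Q i : V) : ℂ) with hy
  have hcV : ∀ i, c i ∈ V := fun i => (Module.finBasis ℚ P i : V).2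
  have hyV : ∀ i, y i ∈ V := fun i => (Module.finBasis ℚ Q i : V).2
  have hDc : ∀ i, D (c i) = 0 := fun i => (Module.finBasis ℚ P i).2
  have hci : LinearIndependent ℚ (fun i => (Submodule.span ℚ B).mkQ (c i)) := by
    have h1 := (Module.finBasis ℚ P).linearIndependent
    have h2 := h1.map' (((Submodule.span ℚ B).mkQ ∘ₗ V.subtype) ∘ₗ P.subtype)
      (LinearMap.ker_eq_bot.mpr (hinj.comp Subtype.val_injective))
    exact h2
  set Sc : Set ℂ := Set.range c ∪ Set.range fun i => Complex.exp (c i) with hSc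
  set Sy : Set ℂ := Set.range y ∪ Set.range fun i => Complex.exp (y i) with hSy
  set Sx : Set ℂ := Set.range x ∪ Set.range fun i => Complex.exp (x i) with hSx
  have hScf : Sc.Finite := (Set.finite_range _).union (Set.finite_range _)
  have hSxf : Sx.Finite := (Set.finite_range _).union (Set.finite_range _)
  have hSyf : Sy.Finite := (Set.finite_range _).union (Set.finite_range _)
  have hrc : (Module.finrank ℚ P : ℕ∞) ≤ M.eRk Sc := by
    rw [eRk_eq_trdegOver _ _ hScf]
    have := hstrong _ c
    rw [deltaExp, linDimOver_eq B c hci] at this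
    have h3 : Module.finrank ℚ P ≤ trdegOver (B ∪ Complex.exp '' B) Sc := by
      simp only [hSc]; omega
    exact_mod_cast h3
  have hrx : M.eRk Sx = n := by
    rw [eRk_eq_trdegOver _ _ hSxf]
    rw [deltaExp, linDimOver_eq B x hx] at hd
    have h3 : trdegOver (B ∪ Complex.exp '' B) Sx = n := by
      simp only [hSx]; omega
    exact_mod_cast h3
  have hcl : ∀ a ∈ V, a ∈ M.closure Sx ∧ Complex.exp a ∈ M.closure Sx := by
    intro a ha
    have := span_subset_closure K (Set.range x) a ha
    rwa [← Set.range_comp] at this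
  have hU : Sc ∪ Sy ⊆ M.closure Sx := by
    rintro _ ((⟨i, rfl⟩ | ⟨i, rfl⟩) | (⟨i, rfl⟩ | ⟨i, rfl⟩))
    exacts [(hcl _ (hcV i)).1, (hcl _ (hcV i)).2, (hcl _ (hyV i)).1, (hcl _ (hyV i)).2]
  have hrU : M.eRk (Sc ∪ Sy) ≤ n := by
    rw [← hrx, ← M.eRk_closure_eq Sx]
    exact M.eRk_mono hU
  obtain ⟨s, hs⟩ := M.exists_isBasis Sc (Set.subset_univ _)
  obtain ⟨t, ht, hst⟩ := hs.indep.subset_isBasis_of_subset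
    (hs.subset.trans (Set.subset_union_left (t := Sy))) (Set.subset_univ _)
  have htf : t.Finite := (hScf.union hSyf).subset ht.subset
  have hsf : s.Finite := hScf.subset hs.subset
  have hsc : Module.finrank ℚ P ≤ s.ncard := by
    rw [← hs.encard_eq_eRk, ← hsf.cast_ncard_eq] at hrc
    exact_mod_cast hrc
  have htc : t.ncard ≤ n := by
    rw [← ht.encard_eq_eRk, ← htf.cast_ncard_eq] at hrU
    exact_mod_cast hrU
  have hDs : ∀ a ∈ s, D a = 0 := by
    intro a ha
    rcases hs.subset ha with ⟨i, rfl⟩ | ⟨i, rfl⟩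
    · exact hDc i
    · exact hexp0 _ (hcV i) (hDc i)
  have halg : ∀ a ∈ Sc ∪ Sy, IsAlgebraic (Algebra.adjoin K t) a :=
    (AlgebraicIndependent.matroid_isBasis_iff.mp ht).2.2
  refine ax_step D y (fun i => hlam _ (hyV i)) ?_ ((htf.sdiff (t := s)).toFinset) ?_ ?_ ?_
  · intro q hq
    have hz : (∑ i, q i • Module.finBasis ℚ Q i) = 0 := by
      have h1 : ((∑ i, q i • Module.finBasis ℚ Q i : Q) : V) ∈ P := by
        change D (((∑ i, q i • Module.finBasis ℚ Q i : Q) : V) : ℂ) = 0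
        convert hq using 2
        simp [hy]
      have h2 := hPQ.disjoint.le_bot ⟨h1, (∑ i, q i • Module.finBasis ℚ Q i : Q).2⟩
      exact Subtype.ext (by simpa using h2)
    funext i
    exact Fintype.linearIndependent_iff.mp (Module.finBasis ℚ Q).linearIndependent q hz i
  · rw [← Set.ncard_eq_toFinset_card _ htf.sdiff, Set.ncard_sdiff hst hsf]
    omega
  · intro E hE i
    have hEK : ∀ a, D a = 0 → E a = 0 := by
      intro a ha
      exact E.map_algebraMap (⟨a, (mem_constF D a).mpr ha⟩ : constF D)
    have hEt : ∀ a ∈ t, E a = 0 := by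
      intro a ha
      by_cases has : a ∈ s
      · exact hEK a (hDs a has)
      · exact hE a (by simp [ha, has])
    have key := kill_closure K (E.restrictScalars ℤ) (fun a ha => hEK a (hDK a ha)) t hEt
    exact ⟨key _ (halg _ (Or.inr (Or.inl ⟨i, rfl⟩))), key _ (halg _ (Or.inr (Or.inr ⟨i, rfl⟩)))⟩
  · by_contra! hT
    have hDt : ∀ a ∈ t, D a = 0 := by
      intro a ha
      by_cases has : a ∈ s
      · exact hDs a has
      · exact hT a (by simp [ha, has])
    have key := kill_closure K D hDK t hDt
    have hQP : Q ≤ P := by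
      intro v hv
      have h1 : ∀ w : Q, (w : V) ∈ P := by
        intro w
        rw [← (Module.finBasis ℚ Q).sum_repr w]
        rw [Submodule.coe_sum]
        refine Submodule.sum_mem _ fun i _ => ?_
        refine P.smul_mem _ ?_
        exact key _ (halg _ (Or.inr (Or.inl ⟨i, rfl⟩)))
      exact h1 ⟨v, hv⟩
    have hPt : P = ⊤ := by
      rw [← hPQ.sup_eq_top, sup_eq_left.mpr hQP]
    apply hcon
    intro i
    have : (⟨x i, hxV i⟩ : V) ∈ P := by rw [hPt]; trivial
    exact this

lemma countable_adjoin (S : Set ℂ) (h : S.Countable) :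
    Countable (IntermediateField.adjoin ℚ S) := by
  have h1 := IntermediateField.cardinalMk_adjoin_le ℚ S
  rw [← Cardinal.mk_le_aleph0_iff]
  refine h1.trans (max_le (max_le ?_ ?_) le_rfl)
  · exact Cardinal.mk_le_aleph0
  · exact Cardinal.le_aleph0_iff_set_countable.mpr h

lemma countable_mvPoly (K : Type) [Field K] [Countable K] (σ : Type) [Countable σ] :
    Countable (MvPolynomial σ K) := by
  have h1 := MvPolynomial.cardinalMk_le_max (R := K) (σ := σ)
  rw [← Cardinal.mk_le_aleph0_iff]
  exact h1.trans (max_le (max_le Cardinal.mk_le_aleph0 Cardinal.mk_le_aleph0) le_rfl)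

/-- The value of a polynomial in `x, exp x`. -/
noncomputable def evE (K : IntermediateField ℚ ℂ) {n : ℕ} (x : Fin n → ℂ) :
    MvPolynomial (Fin n ⊕ Fin n) K →ₐ[K] ℂ :=
  MvPolynomial.aeval (Sum.elim x (fun i => Complex.exp (x i)))

/-- First order deformation of `evE` in direction `v`. -/
noncomputable def defE (K : IntermediateField ℚ ℂ) {n : ℕ} (x v : Fin n → ℂ) :
    MvPolynomial (Fin n ⊕ Fin n) K →+* TrivSqZeroExt ℂ ℂ :=
  MvPolynomial.eval₂Hom ((TrivSqZeroExt.inlHom ℂ ℂ).comp (algebraMap K ℂ))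
    (Sum.elim (fun i => TrivSqZeroExt.inl (x i) + TrivSqZeroExt.inr (v i))
      (fun i => TrivSqZeroExt.inl (Complex.exp (x i)) +
        TrivSqZeroExt.inr (Complex.exp (x i) * v i)))

lemma defE_C (K : IntermediateField ℚ ℂ) {n : ℕ} (x v : Fin n → ℂ) (a : K) :
    defE K x v (MvPolynomial.C a) = TrivSqZeroExt.inl (a : ℂ) := by
  simp [defE]

lemma defE_inl (K : IntermediateField ℚ ℂ) {n : ℕ} (x v : Fin n → ℂ) (i : Fin n) :
    defE K x v (MvPolynomial.X (Sum.inl i)) =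
      TrivSqZeroExt.inl (x i) + TrivSqZeroExt.inr (v i) := by
  simp [defE]

lemma defE_inr (K : IntermediateField ℚ ℂ) {n : ℕ} (x v : Fin n → ℂ) (i : Fin n) :
    defE K x v (MvPolynomial.X (Sum.inr i)) =
      TrivSqZeroExt.inl (Complex.exp (x i)) + TrivSqZeroExt.inr (Complex.exp (x i) * v i) := by
  simp [defE]

lemma defE_fst (K : IntermediateField ℚ ℂ) {n : ℕ} (x v : Fin n → ℂ)
    (p : MvPolynomial (Fin n ⊕ Fin n) K) : (defE K x v p).fst = evE K x p := by
  induction p using MvPolynomial.induction_on with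
  | C a => rw [defE_C]; simp [evE]
  | add p q hp hq => simp [hp, hq]
  | mul_X p j hp =>
    rw [map_mul, map_mul, TrivSqZeroExt.fst_mul, hp]
    congr 1
    cases j with
    | inl i => rw [defE_inl]; simp [evE]
    | inr i => rw [defE_inr]; simp [evE]

lemma evE_hasFDerivAt (K : IntermediateField ℚ ℂ) {n : ℕ} (x : Fin n → ℂ)
    (p : MvPolynomial (Fin n ⊕ Fin n) K) :
    ∃ L : (Fin n → ℂ) →L[ℂ] ℂ, HasFDerivAt (fun x => evE K x p) L x ∧
      ∀ v, L v = (defE K x v p).snd := by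
  induction p using MvPolynomial.induction_on with
  | C a =>
    refine ⟨0, ?_, fun v => by rw [defE_C]; simp⟩
    simpa [evE] using hasFDerivAt_const (algebraMap K ℂ a) x
  | add p q hp hq =>
    obtain ⟨L, hL, hL'⟩ := hp
    obtain ⟨N, hN, hN'⟩ := hq
    refine ⟨L + N, ?_, fun v => by simp [hL', hN']⟩
    have := hL.add hN
    simp only [map_add]
    exact this
  | mul_X p j hp =>
    obtain ⟨L, hL, hL'⟩ := hp
    have hX : ∃ N : (Fin n → ℂ) →L[ℂ] ℂ,
        HasFDerivAt (fun x => evE K x (MvPolynomial.X j)) N x ∧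
        ∀ v, N v = (defE K x v (MvPolynomial.X j)).snd := by
      cases j with
      | inl i =>
        refine ⟨ContinuousLinearMap.proj i, ?_, fun v => by rw [defE_inl]; simp⟩
        simpa [evE] using hasFDerivAt_apply i x
      | inr i =>
        refine ⟨Complex.exp (x i) • ContinuousLinearMap.proj i, ?_,
          fun v => by rw [defE_inr]; simp⟩
        simpa [evE] using (hasFDerivAt_apply (𝕜 := ℂ) i x).cexp
    obtain ⟨N, hN, hN'⟩ := hX
    have hLN := hL.mul hN
    refine ⟨_, by simp only [map_mul]; exact hLN, fun v => ?_⟩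
    rw [map_mul, TrivSqZeroExt.snd_mul, ← hN', ← hL', defE_fst, defE_fst]
    simp [mul_comm]

/-- Nondegenerate common zeros of a finite system of exponential polynomials. -/
def nondegZeros (K : IntermediateField ℚ ℂ) (n : ℕ)
    (G : Finset (MvPolynomial (Fin n ⊕ Fin n) K)) : Set (Fin n → ℂ) :=
  {x | (∀ p ∈ G, evE K x p = 0) ∧ ∀ v, (∀ p ∈ G, (defE K x v p).snd = 0) → v = 0}

lemma countable_nondegZeros (K : IntermediateField ℚ ℂ) (n : ℕ)
    (G : Finset (MvPolynomial (Fin n ⊕ Fin n) K)) : (nondegZeros K n G).Countable := by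
  classical
  refine (HereditarilyLindelofSpace.isLindelof (nondegZeros K n G)).countable ?_
  rw [discreteTopology_subtype_iff]
  intro x hx
  choose L hL hL' using fun p : G => evE_hasFDerivAt K x p.1
  have h1 : HasFDerivAt (fun x => fun p : G => evE K x p.1) (ContinuousLinearMap.pi L) x :=
    hasFDerivAt_pi.mpr hL
  have h2 : ∃ C, AntilipschitzWith C (ContinuousLinearMap.pi L) := by
    have hk : LinearMap.ker (ContinuousLinearMap.pi L : (Fin n → ℂ) →ₗ[ℂ] (G → ℂ)) = ⊥ := by
      rw [LinearMap.ker_eq_bot']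
      intro v hv
      apply hx.2 v
      intro p hp
      have := congrFun hv ⟨p, hp⟩
      rw [← hL' ⟨p, hp⟩]
      exact this
    obtain ⟨C, -, hC⟩ := LinearMap.exists_antilipschitzWith _ hk
    exact ⟨C, hC⟩
  have h3 := h1.eventually_ne (c := 0) h2
  rw [← disjoint_iff]
  rw [Filter.disjoint_principal_right]
  filter_upwards [h3] with z hz hzm
  exact hz (funext fun p => hzm.1 p.1 p.2)

lemma exists_der_gen {R : Type*} [CommRing R] (e : R →+* ℂ) (d : R →+* TrivSqZeroExt ℂ ℂ)
    (hfst : ∀ p, (d p).fst = e p) (h : ∀ p, e p = 0 → d p = 0) :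
    ∃ D : Derivation ℤ ℂ ℂ, ∀ p, D (e p) = (d p).snd := by
  have : (RingHom.ker e).IsPrime := RingHom.ker_isPrime _
  let algI : Algebra (R ⧸ RingHom.ker e) ℂ := (RingHom.kerLift e).toAlgebra
  have hgi : Function.Injective (algebraMap (R ⧸ RingHom.ker e) ℂ) := RingHom.kerLift_injective e
  have : FaithfulSMul (R ⧸ RingHom.ker e) ℂ :=
    (faithfulSMul_iff_algebraMap_injective _ ℂ).mpr hgi
  obtain ⟨D, hD⟩ := exists_derivation_ext (A := R ⧸ RingHom.ker e) (L := ℂ)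
    (Ideal.Quotient.lift (RingHom.ker e) d (fun p hp => h p hp)) (by
      intro a
      obtain ⟨p, rfl⟩ := Ideal.Quotient.mk_surjective a
      exact hfst p)
  exact ⟨D, fun p => hD (Ideal.Quotient.mk _ p)⟩

lemma exists_der (K : IntermediateField ℚ ℂ) {n : ℕ} (x v : Fin n → ℂ)
    (h : ∀ p, evE K x p = 0 → defE K x v p = 0) :
    ∃ D : Derivation ℤ ℂ ℂ, (∀ a ∈ K, D a = 0) ∧ (∀ i, D (x i) = v i) ∧
      ∀ i, D (Complex.exp (x i)) = Complex.exp (x i) * v i := by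
  obtain ⟨D, hD'⟩ := exists_der_gen (evE K x).toRingHom (defE K x v) (defE_fst K x v) h
  replace hD' : ∀ p, D (evE K x p) = (defE K x v p).snd := hD'
  refine ⟨D, ?_, ?_, ?_⟩
  · intro a ha
    have := hD' (MvPolynomial.C ⟨a, ha⟩)
    rw [defE_C] at this
    simpa [evE] using this
  · intro i
    have := hD' (MvPolynomial.X (Sum.inl i))
    rw [defE_inl] at this
    simpa [evE] using this
  · intro i
    have := hD' (MvPolynomial.X (Sum.inr i))
    rw [defE_inr] at this
    simpa [evE] using this

lemma mem_nondegZeros (B : Set ℂ) (hstrong : ∀ (n : ℕ) (x : Fin n → ℂ), deltaExp B x ≥ 0)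
    {n : ℕ} (x : Fin n → ℂ) (hx : LinearIndependent ℚ (fun i => (Submodule.span ℚ B).mkQ (x i)))
    (hd : deltaExp B x = 0) :
    ∃ G, x ∈ nondegZeros (IntermediateField.adjoin ℚ (B ∪ Complex.exp '' B)) n G := by
  set K := IntermediateField.adjoin ℚ (B ∪ Complex.exp '' B) with hK
  obtain ⟨G, hG⟩ := IsNoetherian.noetherian (RingHom.ker (evE K x).toRingHom)
  have hG0 : ∀ p ∈ G, evE K x p = 0 := by
    intro p hp
    have : p ∈ RingHom.ker (evE K x).toRingHom := by rw [← hG]; exact Submodule.subset_span hp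
    exact this
  refine ⟨G, hG0, ?_⟩
  intro v hv
  have hker : RingHom.ker (evE K x).toRingHom ≤ RingHom.ker (defE K x v) := by
    rw [← hG, Submodule.span_le]
    intro p hp
    refine TrivSqZeroExt.ext ?_ ?_
    · rw [defE_fst, hG0 p hp]; simp
    · rw [hv p hp]; simp
  obtain ⟨D, h1, h2, h3⟩ := exists_der K x v (fun p hp => hker hp)
  funext i
  rw [← h2]
  exact nondeg B hstrong x hx hd D h1 (fun i => by rw [h3, h2]) i

/-- assume the Schanuel Conjecture and let `B ⊆ ℂ` be finite and
strong with respect to `δ_exp`. Then the set of `x₀ ∈ ℂ` lying in the ℚ-span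
of `B`, or contained in a tuple `x`, ℚ-linearly independent over the ℚ-span of
`B`, with `δ_exp(x/B) = 0`, is countable. -/
theorem statement11
    (hSC : ∀ (n : ℕ) (x : Fin n → ℂ), LinearIndependent ℚ x →
      trdeg (Set.range x ∪ Set.range fun i => Complex.exp (x i)) ≥ n)
    (B : Set ℂ) (hBfin : B.Finite)
    (hstrong : ∀ (n : ℕ) (x : Fin n → ℂ), deltaExp B x ≥ 0) :
    Set.Countable {x₀ : ℂ | x₀ ∈ Submodule.span ℚ B ∨
      ∃ (n : ℕ) (x : Fin n → ℂ), (∃ i, x i = x₀)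
        ∧ LinearIndependent ℚ (fun i => (Submodule.span ℚ B).mkQ (x i))
        ∧ deltaExp B x = 0} := by
  let K := IntermediateField.adjoin ℚ (B ∪ Complex.exp '' B)
  have hKc : Countable K :=
    countable_adjoin _ (hBfin.countable.union (hBfin.countable.image _))
  have hpc : ∀ n : ℕ, Countable (MvPolynomial (Fin n ⊕ Fin n) K) :=
    fun n => countable_mvPoly K _
  have hc : ((K : Set ℂ) ∪ ⋃ n : ℕ, ⋃ G : Finset (MvPolynomial (Fin n ⊕ Fin n) K),
      ⋃ i : Fin n, (fun x : Fin n → ℂ => x i) '' nondegZeros K n G).Countable := by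
    refine Set.Countable.union (Set.countable_coe_iff.mp hKc) ?_
    refine Set.countable_iUnion fun n => Set.countable_iUnion fun G =>
      Set.countable_iUnion fun i => (countable_nondegZeros K n G).image _
  refine hc.mono ?_
  rintro x₀ (h | ⟨n, x, ⟨i, rfl⟩, hx, hd⟩)
  · left
    have : Submodule.span ℚ B ≤ Subalgebra.toSubmodule K.toSubalgebra := by
      rw [Submodule.span_le]
      intro b hb
      exact IntermediateField.subset_adjoin ℚ _ (Or.inl hb)
    exact this h
  · right
    obtain ⟨G, hG⟩ := mem_nondegZeros B hstrong x hx hd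
    simp only [Set.mem_iUnion]
    exact ⟨n, G, i, x, hG, rfl⟩
end
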